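/- Under Assumption 1, for any step size η ∈ (0, η₀ ∧ 2/(m+L)), the 2-Wasserstein distance between the stationary distribution π_η of the PRLMC chain and the target π(dx) ∝ exp(−U(x))dx satisfies W₂(π_η, π) ≤ (L/m)·η^{1/2}·[ (2d + 4η²Ld + 8L²η²d)^{1/2} + √(4 − 2/K)·( ηL²·π_η(|x|²)/3 + d )^{1/2} ], where π_η(|x|²) = ∫_{ℝ^d}|x|² π_η(dx). -/

import Mathlib

open MeasureTheory ProbabilityTheory Filter
open scoped ENNReal NNReal RealInnerProductSpace Topology BigOperators

noncomputable section

/-- Euclidean space `ℝ^d`. -/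
abbrev Euc (d : ℕ) : Type := EuclideanSpace ℝ (Fin d)

/-- Assumption 1: `U` is `C¹`, `m`-strongly convex and `L`-gradient Lipschitz
(expressed through the two-sided quadratic bound), with `∇U(0) = 0`. -/
def StrongAssumption {d : ℕ} (U : Euc d → ℝ) (m L : ℝ) : Prop :=
  ContDiff ℝ 1 U ∧ 0 < m ∧ m ≤ L ∧
  (∀ x y : Euc d,
    m / 2 * ‖x - y‖ ^ 2 ≤ U y - U x - ⟪gradient U x, y - x⟫ ∧
    U y - U x - ⟪gradient U x, y - x⟫ ≤ L / 2 * ‖x - y‖ ^ 2) ∧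
  gradient U 0 = 0

/-- Assumption 3: `U` is `C³` with third derivative uniformly bounded by `Lt`. -/
def ThirdDerivBounded {d : ℕ} (U : Euc d → ℝ) (Lt : ℝ) : Prop :=
  ContDiff ℝ 3 U ∧ ∀ x : Euc d, ‖iteratedFDeriv ℝ 3 U x‖ ≤ Lt

/-- The standard Gaussian measure on `ℝ^d`. -/
def stdGaussian (d : ℕ) : Measure (Euc d) :=
  (Measure.pi fun _ : Fin d => ProbabilityTheory.gaussianReal 0 1).map
    ⇑(EuclideanSpace.equiv (Fin d) ℝ).symm

/-- Bernoulli(p) distribution on `ℝ`, giving mass `p` to `1` and `1-p` to `0`. -/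
def bern (p : ℝ≥0∞) : Measure ℝ :=
  p • Measure.dirac (1 : ℝ) + (1 - p) • Measure.dirac (0 : ℝ)

/-- The `i`-th PRLMC midpoint. -/
def prlmcMid {d : ℕ} (U : Euc d → ℝ) (η : ℝ) (K : ℕ) (x : Euc d)
    (g : Fin K → Euc d) (i : Fin K) : Euc d :=
  x - (((i : ℝ) * η / (K : ℝ)) • gradient U x) + Real.sqrt (2 * (i : ℝ) * η / (K : ℝ)) • g i

/-- One step of the PRLMC scheme with step size `η`, Bernoulli variables `h`,
midpoint Gaussians `g` and driving Gaussian `z`. -/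
def prlmcStep {d : ℕ} (U : Euc d → ℝ) (η : ℝ) (K : ℕ) (x : Euc d)
    (h : Fin K → ℝ) (g : Fin K → Euc d) (z : Euc d) : Euc d :=
  x - η • gradient U x
    + η • ∑ i : Fin K, h i • (gradient U x - gradient U (prlmcMid U η K x g i))
    + Real.sqrt (2 * η) • z

/-- The law of the randomness used at a single step of the PRLMC scheme:
`K` i.i.d. Bernoulli(1/K) variables, `K` i.i.d. standard Gaussians for the midpoints
and one standard Gaussian. -/
def prlmcNoise (d K : ℕ) : Measure ((Fin K → ℝ) × (Fin K → Euc d) × Euc d) :=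
  (Measure.pi fun _ : Fin K => bern (K : ℝ≥0∞)⁻¹).prod
    ((Measure.pi fun _ : Fin K => stdGaussian d).prod (stdGaussian d))

/-- The one-step transition kernel `Q_η` of the PRLMC chain. -/
def prlmcKernel {d : ℕ} (U : Euc d → ℝ) (η : ℝ) (K : ℕ) (x : Euc d) : Measure (Euc d) :=
  (prlmcNoise d K).map fun r => prlmcStep U η K x r.1 r.2.1 r.2.2

/-- The law of the PRLMC chain after `n` steps, started from the distribution `μ`. -/
def prlmcIter {d : ℕ} (U : Euc d → ℝ) (η : ℝ) (K : ℕ) (μ : Measure (Euc d)) :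
    ℕ → Measure (Euc d)
  | 0 => μ
  | n + 1 => (prlmcIter U η K μ n).bind (prlmcKernel U η K)

/-- The law of the decreasing-step PRLMC chain after `n` steps (the `(k+1)`-th step uses
step size `γ (k+1)`), started from the distribution `μ`. -/
def prlmcIterVar {d : ℕ} (U : Euc d → ℝ) (K : ℕ) (γ : ℕ → ℝ) (μ : Measure (Euc d)) :
    ℕ → Measure (Euc d)
  | 0 => μ
  | n + 1 => (prlmcIterVar U K γ μ n).bind (prlmcKernel U (γ (n + 1)) K)

/-- Total variation distance. -/
def dTV {d : ℕ} (μ ν : Measure (Euc d)) : ℝ≥0∞ :=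
  ⨆ (A : Set (Euc d)) (_ : MeasurableSet A), max (μ A - ν A) (ν A - μ A)

/-- 2-Wasserstein distance. -/
def W2 {d : ℕ} (μ ν : Measure (Euc d)) : ℝ≥0∞ :=
  ⨅ (π : Measure (Euc d × Euc d)) (_ : π.map Prod.fst = μ ∧ π.map Prod.snd = ν),
    (∫⁻ p, ((‖p.1 - p.2‖₊ : ℝ≥0∞)) ^ 2 ∂π) ^ (1 / 2 : ℝ)

/-- The Gibbs measure `π(dx) ∝ exp(-U(x)) dx`. -/
def gibbs {d : ℕ} (U : Euc d → ℝ) : Measure (Euc d) :=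
  (∫⁻ x, ENNReal.ofReal (Real.exp (-U x)) ∂(volume : Measure (Euc d)))⁻¹ •
    (volume : Measure (Euc d)).withDensity fun x => ENNReal.ofReal (Real.exp (-U x))

/-- Membership in the functional class `𝒢`: `C²` functions with bounded gradient and
bounded Hessian. -/
def MemG {d : ℕ} (h : Euc d → ℝ) : Prop :=
  ContDiff ℝ 2 h ∧ (∃ M, ∀ x, ‖gradient h x‖ ≤ M) ∧
    (∃ M, ∀ x, ‖iteratedFDeriv ℝ 2 h x‖ ≤ M)

/-- The distance `d_𝒢`. -/
def dG {d : ℕ} (μ ν : Measure (Euc d)) : ℝ :=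
  sSup { r : ℝ | ∃ h : Euc d → ℝ, MemG h ∧ r = (∫ x, h x ∂μ) - ∫ x, h x ∂ν }

/-- `B` is a standard `d`-dimensional Brownian motion on `(Ω, P)`. -/
def IsBrownianMotion {Ω : Type} [MeasurableSpace Ω] {d : ℕ} (P : Measure Ω)
    (B : ℝ → Ω → Euc d) : Prop :=
  (∀ t, Measurable (B t)) ∧
  (∀ᵐ ω ∂P, B 0 ω = 0 ∧ Continuous fun t => B t ω) ∧
  (∀ s t : ℝ, 0 ≤ s → s ≤ t →
    Measure.map (fun ω => B t ω - B s ω) P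
      = Measure.map (fun z => Real.sqrt (t - s) • z) (stdGaussian d)) ∧
  (∀ τ : ℕ → ℝ, Monotone τ → 0 ≤ τ 0 →
    iIndepFun (fun (i : ℕ) ω => B (τ (i + 1)) ω - B (τ i) ω) P)

/-- `X` is a solution of the Langevin SDE `dX_t = -∇U(X_t) dt + √2 dB_t` started at `x`. -/
def SolvesLangevin {Ω : Type} [MeasurableSpace Ω] {d : ℕ} (U : Euc d → ℝ) (P : Measure Ω)
    (B X : ℝ → Ω → Euc d) (x : Euc d) : Prop :=
  (∀ t, Measurable (X t)) ∧
  ∀ᵐ ω ∂P, (Continuous fun t => X t ω) ∧ ∀ t, 0 ≤ t →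
    X t ω = x - (∫ s in (0:ℝ)..t, gradient U (X s ω)) + Real.sqrt 2 • B t ω

/-- `κ = 2mL/(m+L)`. -/
def kap (m L : ℝ) : ℝ := 2 * m * L / (m + L)

/-- Cumulative times `t_n = γ_1 + ⋯ + γ_n`. -/
def tseq (γ : ℕ → ℝ) (n : ℕ) : ℝ := ∑ k ∈ Finset.Icc 1 n, γ k

/-! ### Convex analysis -/

section ConvexPart

variable {d : ℕ} {U : Euc d → ℝ} {m L : ℝ}

lemma sa_mono (h : StrongAssumption U m L) (x y : Euc d) :
    m * ‖x - y‖ ^ 2 ≤ ⟪gradient U x - gradient U y, x - y⟫ := by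
  obtain ⟨-, -, -, hq, -⟩ := h
  have h1 := (hq x y).1
  have h2 := (hq y x).1
  rw [norm_sub_rev y x] at h2
  have e : ⟪gradient U x, y - x⟫ = - ⟪gradient U x, x - y⟫ := by
    rw [← inner_neg_right, neg_sub]
  rw [inner_sub_left]
  rw [e] at h1
  linarith

lemma sa_coco (h : StrongAssumption U m L) (x y : Euc d) :
    1 / (2 * L) * ‖gradient U y - gradient U x‖ ^ 2 ≤ U y - U x - ⟪gradient U x, y - x⟫ := by
  obtain ⟨-, hm, hmL, hq, -⟩ := h
  have hL : 0 < L := hm.trans_le hmL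
  set g := gradient U y - gradient U x with hg
  set z := y - (1 / L) • g with hz
  have h1 := (hq x z).1
  have h2 := (hq y z).2
  have h0 : 0 ≤ m / 2 * ‖x - z‖ ^ 2 := by positivity
  have e1 : z - x = (y - x) - (1 / L) • g := by rw [hz]; abel
  have e2 : z - y = - ((1 / L) • g) := by rw [hz]; abel
  have e3 : y - z = (1 / L) • g := by rw [hz]; abel
  rw [e1, inner_sub_right, inner_smul_right] at h1
  rw [e2, e3, inner_neg_right, inner_smul_right, norm_smul, Real.norm_eq_abs,
    abs_of_pos (by positivity)] at h2
  have e4 : ‖g‖ ^ 2 = ⟪gradient U y, g⟫ - ⟪gradient U x, g⟫ := by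
    rw [← inner_sub_left, ← hg, real_inner_self_eq_norm_sq]
  have e5 : L / 2 * (1 / L * ‖g‖) ^ 2 = 1 / (2 * L) * ‖g‖ ^ 2 := by
    field_simp
  rw [e5] at h2
  have e6 : 1 / L * ⟪gradient U y, g⟫ = 1 / L * ⟪gradient U x, g⟫ + 1 / L * ‖g‖ ^ 2 := by
    rw [e4]; ring
  have e7 : 1 / L * ‖g‖ ^ 2 = 2 * (1 / (2 * L) * ‖g‖ ^ 2) := by field_simp
  linarith

lemma sa_lip (h : StrongAssumption U m L) (x y : Euc d) :
    ‖gradient U x - gradient U y‖ ≤ L * ‖x - y‖ := by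
  have hL : 0 < L := h.2.1.trans_le h.2.2.1
  have h1 := sa_coco h x y
  have h2 := sa_coco h y x
  rw [norm_sub_rev] at h1
  have e : ⟪gradient U x, y - x⟫ = - ⟪gradient U x, x - y⟫ := by
    rw [← inner_neg_right, neg_sub]
  rw [e] at h1
  have h3 : 1 / L * ‖gradient U x - gradient U y‖ ^ 2
      ≤ ⟪gradient U x - gradient U y, x - y⟫ := by
    rw [inner_sub_left]
    have e7 : 1 / L * ‖gradient U x - gradient U y‖ ^ 2
      = 2 * (1 / (2 * L) * ‖gradient U x - gradient U y‖ ^ 2) := by field_simp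
    linarith
  have h4 := real_inner_le_norm (gradient U x - gradient U y) (x - y)
  set a := ‖gradient U x - gradient U y‖
  set b := ‖x - y‖
  by_cases ha : a = 0
  · rw [ha]; positivity
  · have ha' : 0 < a := lt_of_le_of_ne (norm_nonneg _) (Ne.symm ha)
    have h5 : 1 / L * a ^ 2 ≤ a * b := h3.trans h4
    have h6 : a ^ 2 ≤ L * (a * b) := by
      have := mul_le_mul_of_nonneg_left h5 hL.le
      rwa [← mul_assoc, mul_one_div_cancel hL.ne', one_mul] at this
    nlinarith

lemma sa_grad_le (h : StrongAssumption U m L) (x : Euc d) :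
    ‖gradient U x‖ ≤ L * ‖x‖ := by
  have := sa_lip h x 0
  rwa [h.2.2.2.2, sub_zero, sub_zero] at this

lemma sa_lipw (h : StrongAssumption U m L) : LipschitzWith (Real.toNNReal L) (gradient U) := by
  apply LipschitzWith.of_dist_le_mul
  intro x y
  rw [dist_eq_norm, dist_eq_norm, Real.coe_toNNReal _ (h.2.1.le.trans h.2.2.1)]
  exact sa_lip h x y

lemma sa_cont (h : StrongAssumption U m L) : Continuous (gradient U) := (sa_lipw h).continuous

lemma sa_meas (h : StrongAssumption U m L) : Measurable (gradient U) := (sa_cont h).measurable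

lemma sa_step (h : StrongAssumption U m L) (x y : Euc d) {η : ℝ} (hη : 0 ≤ η) :
    ‖(x - y) - η • (gradient U x - gradient U y)‖ ^ 2
      ≤ (1 - 2 * η * m + η ^ 2 * L ^ 2) * ‖x - y‖ ^ 2 := by
  rw [norm_sub_sq_real, inner_smul_right, norm_smul, Real.norm_eq_abs, mul_pow, sq_abs,
    real_inner_comm]
  have h1 := sa_mono h x y
  have h2 := sa_lip h x y
  have h3 : ‖gradient U x - gradient U y‖ ^ 2 ≤ (L * ‖x - y‖) ^ 2 := by gcongr
  nlinarith [mul_le_mul_of_nonneg_left h1 hη, mul_le_mul_of_nonneg_left h3 (sq_nonneg η)]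

lemma sa_U_lower (h : StrongAssumption U m L) (x : Euc d) :
    U 0 + m / 2 * ‖x‖ ^ 2 ≤ U x := by
  have := (h.2.2.2.1 0 x).1
  rw [h.2.2.2.2, inner_zero_left, zero_sub, norm_neg] at this
  linarith

lemma sa_U_cont (h : StrongAssumption U m L) : Continuous U := h.1.continuous

lemma sa_step_norm (h : StrongAssumption U m L) (x y : Euc d) {η : ℝ} (hη : 0 ≤ η)
    (hη2 : 2 * η * m ≤ 1) :
    ‖(x - y) - η • (gradient U x - gradient U y)‖
      ≤ (1 - η * m + η ^ 2 * L ^ 2) * ‖x - y‖ := by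
  have h1 := sa_step h x y hη
  have h0 : 0 ≤ 1 - η * m + η ^ 2 * L ^ 2 := by
    have : 0 ≤ η ^ 2 * L ^ 2 := by positivity
    have : 0 ≤ η * m := mul_nonneg hη h.2.1.le
    linarith
  refine le_of_sq_le_sq ?_ (by positivity)
  refine h1.trans ?_
  rw [mul_pow]
  gcongr
  nlinarith [sq_nonneg (η * m - η ^ 2 * L ^ 2), mul_nonneg hη h.2.1.le, sq_nonneg (η * L)]

end ConvexPart

/-! ### Gaussian facts -/

section GaussPart

lemma stdG_eq (d : ℕ) : _root_.stdGaussian d = ProbabilityTheory.stdGaussian (Euc d) := by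
  rw [← map_pi_eq_stdGaussian]
  rfl

instance stdG_prob (d : ℕ) : IsProbabilityMeasure (_root_.stdGaussian d) := by
  rw [stdG_eq]; infer_instance

lemma stdG_memLp (d : ℕ) (p : ℝ≥0∞) (hp : p ≠ ∞) : MemLp (id : Euc d → Euc d) p (_root_.stdGaussian d) := by
  rw [stdG_eq]; exact IsGaussian.memLp_id _ p hp

lemma stdG_integral_sq (d : ℕ) : ∫ z, ‖z‖ ^ 2 ∂(_root_.stdGaussian d) = d := by
  have h1 : ∀ z : Euc d, ‖z‖ ^ 2 = ∑ i, (z i) ^ 2 := fun z => EuclideanSpace.real_norm_sq_eq z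
  simp_rw [h1]
  have hc : ∀ i : Fin d, MemLp (fun z : Euc d => z i) 2 (_root_.stdGaussian d) := by
    intro i
    have := stdG_memLp d 2 (by simp)
    exact (EuclideanSpace.proj (𝕜 := ℝ) i).comp_memLp' this
  rw [integral_finsetSum _ (fun i _ => (hc i).integrable_sq)]
  have : ∀ i : Fin d, ∫ z, (z i) ^ 2 ∂(_root_.stdGaussian d) = 1 := by
    intro i
    have hv := variance_dual_stdGaussian (E := Euc d) (EuclideanSpace.proj (𝕜 := ℝ) i)
    rw [← stdG_eq] at hv
    rw [variance_of_integral_eq_zero] at hv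
    · have hn : ‖(EuclideanSpace.proj (𝕜 := ℝ) i : Euc d →L[ℝ] ℝ)‖ = 1 := by
        apply le_antisymm
        · apply ContinuousLinearMap.opNorm_le_bound _ zero_le_one
          intro x
          rw [one_mul]
          exact PiLp.norm_apply_le x i
        · have := (EuclideanSpace.proj (𝕜 := ℝ) i : Euc d →L[ℝ] ℝ).le_opNorm
            (EuclideanSpace.single i 1)
          simpa using this
      rw [hn] at hv
      simpa using hv
    · exact (EuclideanSpace.proj (𝕜 := ℝ) i).continuous.aemeasurable
    · rw [stdG_eq]; exact integral_strongDual_stdGaussian _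
  simp [this]

lemma stdG_integral_affine (d : ℕ) (a : Euc d) (c : ℝ) :
    ∫ z, ‖a + c • z‖ ^ 2 ∂(_root_.stdGaussian d) = ‖a‖ ^ 2 + c ^ 2 * d := by
  have hL2 := stdG_memLp d 2 (by simp)
  have hi : Integrable (fun z : Euc d => z) (_root_.stdGaussian d) :=
    hL2.integrable (by norm_num)
  have hsq : Integrable (fun z : Euc d => ‖z‖ ^ 2) (_root_.stdGaussian d) := hL2.integrable_norm_pow (by norm_num)
  have e : ∀ z : Euc d, ‖a + c • z‖ ^ 2 = (‖a‖ ^ 2 + 2 * c * ⟪a, z⟫) + c ^ 2 * ‖z‖ ^ 2 := by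
    intro z
    rw [norm_add_sq_real, inner_smul_right, norm_smul, Real.norm_eq_abs, mul_pow, sq_abs]; ring
  simp_rw [e]
  have hin : Integrable (fun z : Euc d => ⟪a, z⟫) (_root_.stdGaussian d) := hi.const_inner a
  rw [integral_add (f := fun z => ‖a‖ ^ 2 + 2 * c * ⟪a, z⟫)
    ((integrable_const _).add (hin.const_mul _)) (hsq.const_mul _),
    integral_add (integrable_const _) (hin.const_mul _), integral_const_mul, integral_const_mul,
    stdG_integral_sq, integral_inner hi]
  have : ∫ z, z ∂(_root_.stdGaussian d) = 0 := by rw [stdG_eq]; exact integral_id_stdGaussian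
  rw [this]
  simp

lemma stdG_integrable_affine (d : ℕ) (a : Euc d) (c : ℝ) :
    Integrable (fun z => ‖a + c • z‖ ^ 2) (_root_.stdGaussian d) := by
  have hL2 := stdG_memLp d 2 (by simp)
  exact ((memLp_const a).add (hL2.const_smul c)).integrable_norm_pow (by norm_num)

lemma enorm_sq_ofReal {E : Type*} [NormedAddCommGroup E] (x : E) :
    ‖x‖ₑ ^ 2 = ENNReal.ofReal (‖x‖ ^ 2) := by
  rw [← ofReal_norm, ENNReal.ofReal_pow (norm_nonneg _)]

lemma stdG_lintegral_affine (d : ℕ) (a : Euc d) (c : ℝ) :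
    ∫⁻ z, ‖a + c • z‖ₑ ^ 2 ∂(_root_.stdGaussian d) = ENNReal.ofReal (‖a‖ ^ 2 + c ^ 2 * d) := by
  rw [← stdG_integral_affine, ofReal_integral_eq_lintegral_ofReal (stdG_integrable_affine d a c)
    (Eventually.of_forall fun _ => by positivity)]
  simp_rw [enorm_sq_ofReal]

/-- Law of `√t • z`. -/
def gT (d : ℕ) (t : ℝ) : Measure (Euc d) := (_root_.stdGaussian d).map fun z => Real.sqrt t • z

instance gT_prob (d : ℕ) (t : ℝ) : IsProbabilityMeasure (gT d t) :=
  Measure.isProbabilityMeasure_map (by fun_prop)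

lemma charFun_gT (d : ℕ) {t : ℝ} (ht : 0 ≤ t) (u : Euc d) :
    charFun (gT d t) u = Complex.exp (-(t * ‖u‖ ^ 2) / 2) := by
  rw [gT, charFun_map_smul, stdG_eq, charFun_stdGaussian, norm_smul, Real.norm_eq_abs,
    abs_of_nonneg (Real.sqrt_nonneg _)]
  congr 2
  push_cast
  rw [mul_pow, ← Complex.ofReal_pow, Real.sq_sqrt ht]

lemma gT_zero (d : ℕ) : gT d 0 = Measure.dirac 0 := by
  simp [gT, Measure.map_const]

lemma gT_add (d : ℕ) {s t : ℝ} (hs : 0 ≤ s) (ht : 0 ≤ t) :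
    ((gT d s).prod (_root_.stdGaussian d)).map (fun p => p.1 + Real.sqrt t • p.2) = gT d (s + t) := by
  have h1 : ((gT d s).prod (_root_.stdGaussian d)).map (fun p => p.1 + Real.sqrt t • p.2)
      = (gT d s).conv (gT d t) := by
    rw [Measure.conv]
    have : (gT d s).prod (gT d t) = ((gT d s).prod (_root_.stdGaussian d)).map
        (Prod.map id (fun z => Real.sqrt t • z)) := by
      rw [← Measure.map_prod_map _ _ measurable_id (by fun_prop), Measure.map_id, gT, gT]
    rw [this, Measure.map_map (by fun_prop) (by fun_prop)]
    rfl
  rw [h1]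
  apply Measure.ext_of_charFun
  ext u
  rw [charFun_conv, charFun_gT d hs, charFun_gT d ht, charFun_gT d (add_nonneg hs ht),
    ← Complex.exp_add]
  congr 1
  push_cast
  ring

lemma gT_density (d : ℕ) {t : ℝ} (ht : 0 < t) :
    ∃ c : ℝ≥0∞, c ≠ 0 ∧ c ≠ ∞ ∧ gT d t = c • (volume : Measure (Euc d)).withDensity
      (fun z => ENNReal.ofReal (Real.exp (-‖z‖ ^ 2 / (2 * t)))) := by
  have hb : (0 : ℝ) < 1 / (2 * t) := by positivity
  have hform : ∀ z : Euc d, Real.exp (-‖z‖ ^ 2 / (2 * t)) = Real.exp (-(1 / (2 * t)) * ‖z‖ ^ 2) := by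
    intro z; congr 1; ring
  have hintg : Integrable (fun z : Euc d => Real.exp (-‖z‖ ^ 2 / (2 * t))) volume := by
    simp_rw [hform]
    have := GaussianFourier.integrable_cexp_neg_mul_sq_norm_add (V := Euc d) (b := (1 / (2 * t) : ℝ))
      (by simpa using hb) 0 0
    have h2 := this.norm
    refine h2.congr (Eventually.of_forall fun z => ?_)
    simp only [Complex.norm_exp]
    congr 1
    simp [← Complex.ofReal_pow]
  set I : ℝ := ∫ z : Euc d, Real.exp (-‖z‖ ^ 2 / (2 * t)) with hI
  have hIpos : 0 < I := integral_exp_pos hintg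
  have hlint : ∫⁻ z : Euc d, ENNReal.ofReal (Real.exp (-‖z‖ ^ 2 / (2 * t))) = ENNReal.ofReal I := by
    rw [hI, ofReal_integral_eq_lintegral_ofReal hintg (Eventually.of_forall fun _ => (Real.exp_pos _).le)]
  set c : ℝ≥0∞ := (ENNReal.ofReal I)⁻¹ with hc
  have hc0 : c ≠ 0 := by simp [hc]
  have hct : c ≠ ∞ := by simp [hc, hIpos]
  refine ⟨c, hc0, hct, ?_⟩
  set ν := c • (volume : Measure (Euc d)).withDensity
      (fun z => ENNReal.ofReal (Real.exp (-‖z‖ ^ 2 / (2 * t)))) with hν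
  have : IsProbabilityMeasure ν := by
    constructor
    rw [hν, Measure.smul_apply, withDensity_apply _ MeasurableSet.univ, setLIntegral_univ, hlint,
      smul_eq_mul, hc, ENNReal.inv_mul_cancel (by simpa using hIpos) (by simp)]
  apply Measure.ext_of_charFun
  ext u
  rw [charFun_gT d ht.le, charFun_apply, hν, integral_smul_measure,
    integral_withDensity_eq_integral_toReal_smul (by fun_prop) (by simp)]
  have hf : ∀ x : Euc d, (ENNReal.ofReal (Real.exp (-‖x‖ ^ 2 / (2 * t)))).toReal •
      Complex.exp (⟪x, u⟫ * Complex.I)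
      = Complex.exp (-((1 / (2 * t) : ℝ) : ℂ) * ‖x‖ ^ 2 + Complex.I * ⟪u, x⟫) := by
    intro x
    rw [ENNReal.toReal_ofReal (Real.exp_pos _).le, hform, Complex.real_smul, Complex.ofReal_exp,
      ← Complex.exp_add, real_inner_comm]
    congr 1
    push_cast
    ring
  simp_rw [hf]
  rw [GaussianFourier.integral_cexp_neg_mul_sq_norm_add (by simpa using hb)]
  have hI2 : (I : ℂ) = (Real.pi / ((1 / (2 * t) : ℝ) : ℂ)) ^ (Module.finrank ℝ (Euc d) / 2 : ℂ) := by
    rw [hI]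
    rw [← GaussianFourier.integral_cexp_neg_mul_sq_norm (V := Euc d) (by simpa using hb),
      ← integral_complex_ofReal]
    congr 1
    ext x
    rw [hform]
    push_cast
    rfl
  rw [← hI2, hc, ENNReal.toReal_inv, ENNReal.toReal_ofReal hIpos.le, Complex.real_smul]
  have : (I : ℂ) ≠ 0 := by exact_mod_cast hIpos.ne'
  push_cast
  rw [← mul_assoc, inv_mul_cancel₀ this, one_mul]
  congr 1
  have ht' : (t : ℂ) ≠ 0 := by exact_mod_cast ht.ne'
  rw [Complex.I_sq]
  field_simp
  ring

end GaussPart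

/-! ### The Gibbs measure and the Metropolis-adjusted chain -/

section GibbsPart

variable {d : ℕ} {U : Euc d → ℝ} {m L : ℝ}

lemma int_gauss (d : ℕ) {b : ℝ} (hb : 0 < b) :
    Integrable (fun x : Euc d => Real.exp (-b * ‖x‖ ^ 2)) volume := by
  have := GaussianFourier.integrable_cexp_neg_mul_sq_norm_add (V := Euc d) (b := (b : ℂ))
      (by simpa using hb) 0 0
  refine this.norm.congr (Eventually.of_forall fun z => ?_)
  simp only [Complex.norm_exp]
  congr 1
  simp [← Complex.ofReal_pow]

lemma sa_int_pow (h : StrongAssumption U m L) :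
    Integrable (fun x => ‖x‖ ^ 4 * Real.exp (-U x)) volume := by
  have hm := h.2.1
  have hU := sa_U_cont h
  refine ((int_gauss d (b := m / 4) (by positivity)).const_mul
    (32 / m ^ 2 * Real.exp (-U 0))).mono' (by fun_prop) (Eventually.of_forall fun x => ?_)
  rw [Real.norm_eq_abs, abs_of_nonneg (by positivity)]
  have h1 : (m / 4 * ‖x‖ ^ 2) ^ 2 / 2 ≤ Real.exp (m / 4 * ‖x‖ ^ 2) := by
    have := Real.quadratic_le_exp_of_nonneg (x := m / 4 * ‖x‖ ^ 2) (by positivity)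
    have : 0 ≤ m / 4 * ‖x‖ ^ 2 := by positivity
    linarith
  have h2 : ‖x‖ ^ 4 ≤ 32 / m ^ 2 * Real.exp (m / 4 * ‖x‖ ^ 2) := by
    have e : ‖x‖ ^ 4 = 32 / m ^ 2 * ((m / 4 * ‖x‖ ^ 2) ^ 2 / 2) := by field_simp; ring
    rw [e]; gcongr
  have h3 : Real.exp (-U x) ≤ Real.exp (-U 0) * Real.exp (-(m / 2) * ‖x‖ ^ 2) := by
    rw [← Real.exp_add]
    apply Real.exp_le_exp.2
    have := sa_U_lower h x
    linarith
  calc ‖x‖ ^ 4 * Real.exp (-U x) ≤ (32 / m ^ 2 * Real.exp (m / 4 * ‖x‖ ^ 2)) *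
        (Real.exp (-U 0) * Real.exp (-(m / 2) * ‖x‖ ^ 2)) := by gcongr
    _ = 32 / m ^ 2 * Real.exp (-U 0) *
        (Real.exp (m / 4 * ‖x‖ ^ 2) * Real.exp (-(m / 2) * ‖x‖ ^ 2)) := by ring
    _ = _ := by rw [← Real.exp_add]; congr 2; ring

lemma sa_int_exp (h : StrongAssumption U m L) :
    Integrable (fun x => Real.exp (-U x)) volume := by
  have hm := h.2.1
  have hU := sa_U_cont h
  refine ((int_gauss d (b := m / 2) (by positivity)).const_mul
    (Real.exp (-U 0))).mono' (by fun_prop) (Eventually.of_forall fun x => ?_)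
  rw [Real.norm_eq_abs, abs_of_nonneg (by positivity), ← Real.exp_add]
  apply Real.exp_le_exp.2
  have := sa_U_lower h x
  linarith

lemma gibbs_const (h : StrongAssumption U m L) :
    (∫⁻ x, ENNReal.ofReal (Real.exp (-U x)) ∂(volume : Measure (Euc d))) ≠ 0 ∧
    (∫⁻ x, ENNReal.ofReal (Real.exp (-U x)) ∂(volume : Measure (Euc d))) ≠ ∞ := by
  have hi := sa_int_exp h
  rw [← ofReal_integral_eq_lintegral_ofReal hi (Eventually.of_forall fun _ => (Real.exp_pos _).le)]
  refine ⟨?_, by simp⟩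
  have := integral_exp_pos hi
  simpa using this

lemma gibbs_prob (h : StrongAssumption U m L) : IsProbabilityMeasure (gibbs U) := by
  obtain ⟨h0, h1⟩ := gibbs_const h
  constructor
  rw [gibbs, Measure.smul_apply, withDensity_apply _ MeasurableSet.univ, setLIntegral_univ,
      smul_eq_mul, ENNReal.inv_mul_cancel h0 h1]

lemma gibbs_memLp4 (h : StrongAssumption U m L) : MemLp (id : Euc d → Euc d) 4 (gibbs U) := by
  have hU := sa_U_cont h
  obtain ⟨h0, h1⟩ := gibbs_const h
  rw [← integrable_norm_rpow_iff (by fun_prop) (by norm_num) (by norm_num)]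
  have e4 : ∀ x : Euc d, ‖id x‖ ^ (4 : ℝ≥0∞).toReal = ‖x‖ ^ 4 := by
    intro x
    rw [show (4 : ℝ≥0∞).toReal = ((4 : ℕ) : ℝ) by norm_num, Real.rpow_natCast]; rfl
  simp_rw [e4]
  rw [gibbs]
  apply Integrable.smul_measure _ (by simpa using h0)
  rw [integrable_withDensity_iff (by fun_prop) (by simp)]
  refine (sa_int_pow h).congr (Eventually.of_forall fun x => ?_)
  simp [ENNReal.toReal_ofReal (Real.exp_pos _).le]

lemma gibbs_lintegral (h : StrongAssumption U m L) :
    ∃ c : ℝ≥0∞, c ≠ 0 ∧ c ≠ ∞ ∧ ∀ f : Euc d → ℝ≥0∞, Measurable f →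
      ∫⁻ x, f x ∂(gibbs U) = c * ∫⁻ x, ENNReal.ofReal (Real.exp (-U x)) * f x := by
  obtain ⟨h0, h1⟩ := gibbs_const h
  have hU := sa_U_cont h
  refine ⟨_, ENNReal.inv_ne_zero.2 h1, ENNReal.inv_ne_top.2 h0, fun f hf => ?_⟩
  rw [gibbs, lintegral_smul_measure, smul_eq_mul,
    lintegral_withDensity_eq_lintegral_mul _ (by fun_prop) hf]
  rfl

/-- log-density of the pair (state, proposal), up to a constant -/
def logA (U : Euc d → ℝ) (ε : ℝ) (x y : Euc d) : ℝ :=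
  -U x - ‖y - x + ε • gradient U x‖ ^ 2 / (4 * ε)

def ell (U : Euc d → ℝ) (ε : ℝ) (x y : Euc d) : ℝ := logA U ε y x - logA U ε x y

def acc (U : Euc d → ℝ) (ε : ℝ) (x y : Euc d) : ℝ := min 1 (Real.exp (ell U ε x y))

def propo (U : Euc d → ℝ) (ε : ℝ) (x z : Euc d) : Euc d :=
  x - ε • gradient U x + Real.sqrt (2 * ε) • z

def mala (U : Euc d → ℝ) (ε : ℝ) (x : Euc d) (z : Euc d) (u : ℝ) : Euc d :=
  if u ≤ acc U ε x (propo U ε x z) then propo U ε x z else x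

def unif : Measure ℝ := (volume : Measure ℝ).restrict (Set.Icc 0 1)

instance unif_prob : IsProbabilityMeasure unif := by
  constructor
  simp [unif]

lemma acc_nonneg (ε : ℝ) (x y : Euc d) : 0 ≤ acc U ε x y := le_min zero_le_one (Real.exp_pos _).le

lemma acc_le_one (ε : ℝ) (x y : Euc d) : acc U ε x y ≤ 1 := min_le_left _ _

lemma one_sub_acc (ε : ℝ) (x y : Euc d) : 1 - acc U ε x y ≤ |ell U ε x y| := by
  rw [acc]
  rcases le_total 1 (Real.exp (ell U ε x y)) with h | h
  · rw [min_eq_left h]; simp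
  · rw [min_eq_right h]
    have := Real.add_one_le_exp (ell U ε x y)
    have := neg_abs_le (ell U ε x y)
    linarith

lemma exp_logA_acc (ε : ℝ) (x y : Euc d) :
    Real.exp (logA U ε x y) * acc U ε x y
      = min (Real.exp (logA U ε x y)) (Real.exp (logA U ε y x)) := by
  rw [acc, mul_min_of_nonneg _ _ (Real.exp_pos _).le, mul_one, ← Real.exp_add, ell]
  congr 2
  ring

lemma meas_logA (h : StrongAssumption U m L) (ε : ℝ) :
    Continuous fun p : Euc d × Euc d => logA U ε p.1 p.2 := by
  have hU := sa_U_cont h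
  have hg := sa_cont h
  unfold logA
  fun_prop

lemma meas_acc (h : StrongAssumption U m L) (ε : ℝ) :
    Continuous fun p : Euc d × Euc d => acc U ε p.1 p.2 := by
  have h1 := meas_logA h ε
  have h2 : Continuous fun p : Euc d × Euc d => logA U ε p.2 p.1 := h1.comp continuous_swap
  unfold acc ell
  fun_prop

lemma meas_propo (h : StrongAssumption U m L) (ε : ℝ) :
    Continuous fun p : Euc d × Euc d => propo U ε p.1 p.2 := by
  have hg := sa_cont h
  unfold propo
  fun_prop

lemma meas_acc_propo (h : StrongAssumption U m L) (ε : ℝ) :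
    Continuous fun p : Euc d × Euc d => acc U ε p.1 (propo U ε p.1 p.2) :=
  (meas_acc h ε).comp (continuous_fst.prodMk (meas_propo h ε))

lemma meas_mala (h : StrongAssumption U m L) (ε : ℝ) :
    Measurable fun p : Euc d × Euc d × ℝ => mala U ε p.1 p.2.1 p.2.2 := by
  have h1 := (meas_propo h ε).measurable
  have h2 : Measurable fun p : Euc d × Euc d × ℝ => propo U ε p.1 p.2.1 := by fun_prop
  have h1' := (meas_acc_propo h ε).measurable
  have h3 : Measurable fun p : Euc d × Euc d × ℝ => acc U ε p.1 (propo U ε p.1 p.2.1) := by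
    have h0 : Measurable fun p : Euc d × Euc d × ℝ => (p.1, p.2.1) := by fun_prop
    simpa only [Function.comp_def] using h1'.comp h0
  have h4 : Measurable fun p : Euc d × Euc d × ℝ => p.2.2 := by fun_prop
  have h5 : MeasurableSet {p : Euc d × Euc d × ℝ | p.2.2 ≤ acc U ε p.1 (propo U ε p.1 p.2.1)} :=
    measurableSet_le h4 h3
  simp only [mala]
  exact Measurable.ite h5 h2 measurable_fst

lemma lint_unif {a : ℝ} (h0 : 0 ≤ a) (h1 : a ≤ 1) (s t : ℝ≥0∞) :
    ∫⁻ u, (if u ≤ a then s else t) ∂unif = ENNReal.ofReal a * s + ENNReal.ofReal (1 - a) * t := by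
  have e : (fun u : ℝ => if u ≤ a then s else t)
      = fun u => (Set.Iic a).indicator (fun _ => s) u + (Set.Ioi a).indicator (fun _ => t) u := by
    ext u
    by_cases hu : u ≤ a
    · simp [hu]
    · have : a < u := not_le.1 hu
      simp [hu, this]
  rw [e, lintegral_add_left (measurable_const.indicator measurableSet_Iic),
    lintegral_indicator_const measurableSet_Iic, lintegral_indicator_const measurableSet_Ioi]
  have e1 : unif (Set.Iic a) = ENNReal.ofReal a := by
    rw [unif, Measure.restrict_apply measurableSet_Iic]
    have : Set.Iic a ∩ Set.Icc 0 1 = Set.Icc 0 a := by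
      ext u; simp only [Set.mem_inter_iff, Set.mem_Iic, Set.mem_Icc]
      constructor
      · rintro ⟨h, h', -⟩; exact ⟨h', h⟩
      · rintro ⟨h, h'⟩; exact ⟨h', h, h'.trans h1⟩
    rw [this, Real.volume_Icc, sub_zero]
  have e2 : unif (Set.Ioi a) = ENNReal.ofReal (1 - a) := by
    rw [unif, Measure.restrict_apply measurableSet_Ioi]
    have : Set.Ioi a ∩ Set.Icc 0 1 = Set.Ioc a 1 := by
      ext u; simp only [Set.mem_inter_iff, Set.mem_Ioi, Set.mem_Icc, Set.mem_Ioc]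
      constructor
      · rintro ⟨h, -, h'⟩; exact ⟨h, h'⟩
      · rintro ⟨h, h'⟩; exact ⟨h, h0.trans h.le, h'⟩
    rw [this, Real.volume_Ioc]
  rw [e1, e2, mul_comm s, mul_comm t]

lemma lint_prop (h : StrongAssumption U m L) {ε : ℝ} (hε : 0 < ε) :
    ∃ k : ℝ≥0∞, ∀ g : Euc d × Euc d → ℝ≥0∞, Measurable g →
      ∫⁻ x, ∫⁻ z, g (x, propo U ε x z) ∂(_root_.stdGaussian d) ∂(gibbs U)
        = k * ∫⁻ x, ∫⁻ y, ENNReal.ofReal (Real.exp (logA U ε x y)) * g (x, y) := by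
  obtain ⟨c, hc0, hct, hc⟩ := gibbs_lintegral h
  obtain ⟨b, hb0, hbt, hb⟩ := gT_density d (t := 2 * ε) (by positivity)
  have hU := sa_U_cont h
  have hgr := sa_cont h
  refine ⟨c * b, fun g hg => ?_⟩
  have h1 : ∀ x, ∫⁻ z, g (x, propo U ε x z) ∂(_root_.stdGaussian d)
      = b * ∫⁻ y, ENNReal.ofReal (Real.exp (-‖y - x + ε • gradient U x‖ ^ 2 / (4 * ε))) * g (x, y) := by
    intro x
    have e1 : ∫⁻ z, g (x, propo U ε x z) ∂(_root_.stdGaussian d)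
        = ∫⁻ w, g (x, x - ε • gradient U x + w) ∂(gT d (2 * ε)) := by
      rw [gT, lintegral_map (by fun_prop) (by fun_prop)]
      rfl
    rw [e1, hb, lintegral_smul_measure, smul_eq_mul,
      lintegral_withDensity_eq_lintegral_mul _ (by fun_prop) (by fun_prop)]
    congr 1
    conv_rhs => rw [← lintegral_add_left_eq_self _ (x - ε • gradient U x)]
    apply lintegral_congr
    intro w
    simp only [Pi.mul_apply]
    have e2 : x - ε • gradient U x + w - x + ε • gradient U x = w := by abel
    rw [e2]
    congr 4
    ring
  simp_rw [h1]
  rw [hc _ (by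
    apply Measurable.const_mul
    apply Measurable.lintegral_prod_right' (f := fun p : Euc d × Euc d =>
      ENNReal.ofReal (Real.exp (-‖p.2 - p.1 + ε • gradient U p.1‖ ^ 2 / (4 * ε))) * g (p.1, p.2))
    have := sa_meas h
    fun_prop), mul_assoc]
  congr 1
  rw [← lintegral_const_mul' _ _ hbt]
  apply lintegral_congr
  intro x
  rw [mul_left_comm, ← lintegral_const_mul' _ _ (by simp)]
  congr 1
  apply lintegral_congr
  intro y
  rw [← mul_assoc, ← ENNReal.ofReal_mul (Real.exp_pos _).le, ← Real.exp_add, logA]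
  congr 4
  ring

lemma mala_inv (h : StrongAssumption U m L) {ε : ℝ} (hε : 0 < ε) :
    ((gibbs U).prod ((_root_.stdGaussian d).prod unif)).map (fun p => mala U ε p.1 p.2.1 p.2.2)
      = gibbs U := by
  have hprob := gibbs_prob h
  obtain ⟨k, hk⟩ := lint_prop h hε
  have ha := (meas_acc h ε).measurable
  have hap := (meas_acc_propo h ε).measurable
  have hp := (meas_propo h ε).measurable
  have hl := (meas_logA h ε).measurable
  apply Measure.ext_of_lintegral
  intro f hf
  rw [lintegral_map hf (meas_mala h ε), lintegral_prod (fun p : Euc d × Euc d × ℝ => f (mala U ε p.1 p.2.1 p.2.2))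
    (hf.comp (meas_mala h ε)).aemeasurable]
  have e1 : ∀ x, ∫⁻ q : Euc d × ℝ, f (mala U ε x q.1 q.2) ∂((_root_.stdGaussian d).prod unif)
      = ∫⁻ z, (ENNReal.ofReal (acc U ε x (propo U ε x z)) * f (propo U ε x z)
        + ENNReal.ofReal (1 - acc U ε x (propo U ε x z)) * f x) ∂(_root_.stdGaussian d) := by
    intro x
    rw [lintegral_prod (fun q : Euc d × ℝ => f (mala U ε x q.1 q.2))
      (hf.comp ((meas_mala h ε).comp measurable_prodMk_left)).aemeasurable]
    apply lintegral_congr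
    intro z
    rw [← lint_unif (acc_nonneg _ _ _) (acc_le_one _ _ _)]
    apply lintegral_congr
    intro u
    rw [mala]
    split_ifs <;> rfl
  simp_rw [e1]
  have e2 : ∀ x, ∫⁻ z, (ENNReal.ofReal (acc U ε x (propo U ε x z)) * f (propo U ε x z)
        + ENNReal.ofReal (1 - acc U ε x (propo U ε x z)) * f x) ∂(_root_.stdGaussian d)
      = ∫⁻ z, ENNReal.ofReal (acc U ε x (propo U ε x z)) * f (propo U ε x z) ∂(_root_.stdGaussian d)
        + ∫⁻ z, ENNReal.ofReal (1 - acc U ε x (propo U ε x z)) * f x ∂(_root_.stdGaussian d) := by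
    intro x
    rw [lintegral_add_left]
    exact ((hap.comp measurable_prodMk_left).ennreal_ofReal).mul
      (hf.comp (hp.comp measurable_prodMk_left))
  simp_rw [e2]
  have m1 : Measurable fun p : Euc d × Euc d => ENNReal.ofReal (acc U ε p.1 p.2) * f p.2 :=
    ha.ennreal_ofReal.mul (hf.comp measurable_snd)
  have m2 : Measurable fun p : Euc d × Euc d => ENNReal.ofReal (acc U ε p.1 p.2) * f p.1 :=
    ha.ennreal_ofReal.mul (hf.comp measurable_fst)
  have mp : Measurable fun p : Euc d × Euc d => (p.1, propo U ε p.1 p.2) :=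
    measurable_fst.prodMk hp
  have key : ∫⁻ x, ∫⁻ z, ENNReal.ofReal (acc U ε x (propo U ε x z)) * f (propo U ε x z)
        ∂(_root_.stdGaussian d) ∂(gibbs U)
      = ∫⁻ x, ∫⁻ z, ENNReal.ofReal (acc U ε x (propo U ε x z)) * f x
        ∂(_root_.stdGaussian d) ∂(gibbs U) := by
    have k1 := hk _ m1
    have k2 := hk _ m2
    simp only at k1 k2
    rw [k1, k2]
    congr 1
    have s1 : ∀ x y : Euc d, ENNReal.ofReal (Real.exp (logA U ε x y)) *
        (ENNReal.ofReal (acc U ε x y) * f y) = ENNReal.ofReal (min (Real.exp (logA U ε x y))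
          (Real.exp (logA U ε y x))) * f y := by
      intro x y
      rw [← mul_assoc, ← ENNReal.ofReal_mul (Real.exp_pos _).le, exp_logA_acc]
    have s2 : ∀ x y : Euc d, ENNReal.ofReal (Real.exp (logA U ε x y)) *
        (ENNReal.ofReal (acc U ε x y) * f x) = ENNReal.ofReal (min (Real.exp (logA U ε x y))
          (Real.exp (logA U ε y x))) * f x := by
      intro x y
      rw [← mul_assoc, ← ENNReal.ofReal_mul (Real.exp_pos _).le, exp_logA_acc]
    simp_rw [s1, s2]
    have hl2 : Measurable fun p : Euc d × Euc d => logA U ε p.2 p.1 := hl.comp measurable_swap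
    rw [lintegral_lintegral_swap]
    · apply lintegral_congr; intro x; apply lintegral_congr; intro y
      rw [min_comm]
    · apply Measurable.aemeasurable
      exact ((hl.exp.min hl2.exp).ennreal_ofReal).mul (hf.comp measurable_snd)
  rw [lintegral_add_left, key, ← lintegral_add_left]
  · apply lintegral_congr
    intro x
    rw [← lintegral_add_left]
    · have : ∀ z, ENNReal.ofReal (acc U ε x (propo U ε x z)) * f x +
          ENNReal.ofReal (1 - acc U ε x (propo U ε x z)) * f x = f x := by
        intro z
        rw [← add_mul, ← ENNReal.ofReal_add (acc_nonneg _ _ _) (by linarith [acc_le_one (U := U) ε x (propo U ε x z)])]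
        simp
      simp_rw [this]
      simp
    · exact ((hap.comp measurable_prodMk_left).ennreal_ofReal).mul_const _
  · exact Measurable.lintegral_prod_right' (m2.comp mp)
  · exact Measurable.lintegral_prod_right' (m1.comp mp)

end GibbsPart

/-! ### The Metropolis correction is negligible -/

section MalaPart

variable {d : ℕ} {U : Euc d → ℝ} {m L : ℝ}

lemma eLp2_sq {α E : Type*} [MeasurableSpace α] [NormedAddCommGroup E] (f : α → E) (μ : Measure α) :
    eLpNorm f 2 μ ^ 2 = ∫⁻ a, ‖f a‖ₑ ^ 2 ∂μ := by
  have := eLpNorm_nnreal_pow_eq_lintegral (μ := μ) (f := f) (p := 2) (by norm_num)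
  simpa using this

def trap (U : Euc d → ℝ) (x y : Euc d) : ℝ :=
  U x - U y + 1 / 2 * ⟪y - x, gradient U x + gradient U y⟫

lemma ell_eq {ε : ℝ} (hε : 0 < ε) (x y : Euc d) :
    ell U ε x y = trap U x y + ε / 4 * (‖gradient U x‖ ^ 2 - ‖gradient U y‖ ^ 2) := by
  rw [ell, logA, logA, trap]
  have e : x - y + ε • gradient U y = -(y - x) + ε • gradient U y := by abel
  rw [e, norm_add_sq_real, norm_add_sq_real, norm_neg, inner_neg_left, inner_smul_right,
    inner_smul_right, norm_smul, norm_smul, inner_add_right, Real.norm_eq_abs, abs_of_pos hε]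
  field_simp
  ring

lemma trap_bound (h : StrongAssumption U m L) (x y : Euc d) :
    |trap U x y| ≤ L * ‖y - x‖ ^ 2 := by
  have hm := h.2.1
  have hL : 0 < L := h.2.1.trans_le h.2.2.1
  have h1 := h.2.2.2.1 x y
  have h2 := sa_mono h y x
  have h3 := (real_inner_le_norm (gradient U y - gradient U x) (y - x)).trans
    (mul_le_mul_of_nonneg_right (sa_lip h y x) (norm_nonneg _))
  rw [norm_sub_rev x y] at h1
  have h0 : 0 ≤ m * ‖y - x‖ ^ 2 := by positivity
  have h0' : 0 ≤ L * ‖y - x‖ ^ 2 := by positivity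
  have e : trap U x y = -(U y - U x - ⟪gradient U x, y - x⟫)
      + 1 / 2 * ⟪gradient U y - gradient U x, y - x⟫ := by
    rw [trap, inner_add_right, real_inner_comm (gradient U x) (y - x),
      real_inner_comm (gradient U y) (y - x), inner_sub_left (gradient U y)]
    ring
  rw [e, abs_le]
  constructor <;> nlinarith

lemma sa_hasDerivAt (h : StrongAssumption U m L) (x v : Euc d) (t : ℝ) :
    HasDerivAt (fun t : ℝ => U (x + t • v)) ⟪gradient U (x + t • v), v⟫ t := by
  have hd : DifferentiableAt ℝ U (x + t • v) := h.1.differentiable (by norm_num) _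
  have hg := hd.hasGradientAt.hasFDerivAt
  have hl : HasDerivAt (fun t : ℝ => x + t • v) v t := by
    simpa using ((hasDerivAt_id t).smul_const v).const_add x
  exact hg.comp_hasDerivAt t hl

lemma trap_little (h : StrongAssumption U m L) {x : Euc d}
    (hx : DifferentiableAt ℝ (gradient U) x) {κ : ℝ} (hκ : 0 < κ) :
    ∃ r > 0, ∀ v : Euc d, ‖v‖ < r → |trap U x (x + v)| ≤ 2 * κ * ‖v‖ ^ 2 := by
  set A := fderiv ℝ (gradient U) x with hA
  have hd := hx.hasFDerivAt
  rw [hasFDerivAt_iff_isLittleO_nhds_zero, Asymptotics.isLittleO_iff] at hd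
  obtain ⟨r, hr, hr2⟩ := Metric.eventually_nhds_iff_ball.1 (hd hκ)
  refine ⟨r, hr, fun v hv => ?_⟩
  have hb : ∀ t ∈ Set.Icc (0 : ℝ) 1, ‖gradient U (x + t • v) - gradient U x - A (t • v)‖ ≤ κ * ‖v‖ := by
    intro t ht
    have hn : ‖t • v‖ ≤ ‖v‖ := by
      rw [norm_smul, Real.norm_eq_abs, abs_of_nonneg ht.1]
      exact mul_le_of_le_one_left (norm_nonneg _) ht.2
    have := hr2 (t • v) (by rw [mem_ball_zero_iff]; linarith)
    exact this.trans (by gcongr)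
  set ψ : ℝ → ℝ := fun t => U (x + t • v) - t * ⟪gradient U x, v⟫ - t ^ 2 / 2 * ⟪A v, v⟫ with hψ
  have hψd : ∀ t ∈ Set.Icc (0 : ℝ) 1, HasDerivWithinAt ψ
      ⟪gradient U (x + t • v) - gradient U x - A (t • v), v⟫ (Set.Icc 0 1) t := by
    intro t _
    have h1 := sa_hasDerivAt h x v t
    have h2 : HasDerivAt (fun t : ℝ => t * ⟪gradient U x, v⟫) ⟪gradient U x, v⟫ t := by
      simpa using (hasDerivAt_id t).mul_const ⟪gradient U x, v⟫
    have h3 : HasDerivAt (fun t : ℝ => t ^ 2 / 2 * ⟪A v, v⟫) (t * ⟪A v, v⟫) t := by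
      have := ((hasDerivAt_pow 2 t).div_const 2).mul_const ⟪A v, v⟫
      have e2 : ((2 : ℕ) : ℝ) * t ^ (2 - 1) / 2 * ⟪A v, v⟫ = t * ⟪A v, v⟫ := by
        norm_num
      rw [e2] at this
      exact this
    have h4 := (h1.sub h2).sub h3
    have e : ⟪gradient U (x + t • v) - gradient U x - A (t • v), v⟫
      = ⟪gradient U (x + t • v), v⟫ - ⟪gradient U x, v⟫ - t * ⟪A v, v⟫ := by
      rw [inner_sub_left, inner_sub_left, map_smul, real_inner_smul_left]
    rw [e]
    exact h4.hasDerivWithinAt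
  have hmv := norm_image_sub_le_of_norm_deriv_le_segment_01' (C := κ * ‖v‖ ^ 2) hψd (by
    intro t ht
    refine (norm_inner_le_norm _ _).trans ?_
    have := hb t ⟨ht.1, ht.2.le⟩
    calc _ ≤ (κ * ‖v‖) * ‖v‖ := by gcongr
      _ = _ := by ring)
  have h1 := hb 1 ⟨zero_le_one, le_refl _⟩
  rw [one_smul] at h1
  have h2 : |⟪gradient U (x + v) - gradient U x - A v, v⟫| ≤ κ * ‖v‖ ^ 2 := by
    refine (abs_real_inner_le_norm _ _).trans ?_
    calc _ ≤ (κ * ‖v‖) * ‖v‖ := by gcongr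
      _ = _ := by ring
  have e : trap U x (x + v) = -(ψ 1 - ψ 0) + 1 / 2 * ⟪gradient U (x + v) - gradient U x - A v, v⟫ := by
    rw [inner_sub_left, inner_sub_left, trap, add_sub_cancel_left, inner_add_right,
      real_inner_comm (gradient U x) v, real_inner_comm (gradient U (x + v)) v]
    simp only [hψ, one_smul, zero_smul, add_zero]
    ring
  rw [e]
  rw [Real.norm_eq_abs] at hmv
  rw [abs_le] at *
  constructor <;> linarith [hmv.1, hmv.2, h2.1, h2.2]

/-- The dominating function. -/
def bb (L : ℝ) (p : Euc d × Euc d) : ℝ := L * ‖p.1‖ + 2 * ‖p.2‖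

lemma propo_sub (h : StrongAssumption U m L) {ε : ℝ} (hε : 0 < ε) (hε1 : ε ≤ 1) (x z : Euc d) :
    ‖propo U ε x z - x‖ ≤ Real.sqrt ε * bb L (x, z) := by
  have e : propo U ε x z - x = Real.sqrt (2 * ε) • z - ε • gradient U x := by
    rw [propo]; abel
  rw [e]
  refine (norm_sub_le _ _).trans ?_
  rw [norm_smul, norm_smul, Real.norm_eq_abs, Real.norm_eq_abs, abs_of_pos hε,
    abs_of_nonneg (Real.sqrt_nonneg _), Real.sqrt_mul (by norm_num), bb]
  have h1 := sa_grad_le h x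
  have h2 : Real.sqrt 2 ≤ 2 := by
    rw [Real.sqrt_le_left (by norm_num)]; norm_num
  have h3 : ε ≤ Real.sqrt ε := by
    have : Real.sqrt ε ≤ 1 := Real.sqrt_le_one.2 hε1
    calc ε = Real.sqrt ε * Real.sqrt ε := (Real.mul_self_sqrt hε.le).symm
      _ ≤ Real.sqrt ε * 1 := by gcongr
      _ = _ := mul_one _
  have h4 : ε * ‖gradient U x‖ ≤ Real.sqrt ε * (L * ‖x‖) := by gcongr
  have h5 : Real.sqrt 2 * Real.sqrt ε * ‖z‖ ≤ 2 * Real.sqrt ε * ‖z‖ := by gcongr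
  simp only
  linarith

/-- normalised rejection cost -/
def GG (U : Euc d → ℝ) (ε : ℝ) (p : Euc d × Euc d) : ℝ :=
  ‖propo U ε p.1 p.2 - p.1‖ ^ 2 * (1 - acc U ε p.1 (propo U ε p.1 p.2)) / ε ^ 2

lemma GG_nonneg (ε : ℝ) (p : Euc d × Euc d) : 0 ≤ GG U ε p := by
  have := acc_le_one (U := U) ε p.1 (propo U ε p.1 p.2)
  have : 0 ≤ 1 - acc U ε p.1 (propo U ε p.1 p.2) := by linarith
  unfold GG
  positivity

lemma GG_le (h : StrongAssumption U m L) {ε : ℝ} (hε : 0 < ε) (hε1 : ε ≤ 1) (p : Euc d × Euc d) :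
    GG U ε p ≤ bb L p ^ 2 * (|trap U p.1 (propo U ε p.1 p.2)| / ε
      + 1 / 4 * |‖gradient U p.1‖ ^ 2 - ‖gradient U (propo U ε p.1 p.2)‖ ^ 2|) := by
  obtain ⟨x, z⟩ := p
  have h1 := propo_sub h hε hε1 x z
  have h2 : ‖propo U ε x z - x‖ ^ 2 ≤ ε * bb L (x, z) ^ 2 := by
    calc _ ≤ (Real.sqrt ε * bb L (x, z)) ^ 2 := by gcongr
      _ = _ := by rw [mul_pow, Real.sq_sqrt hε.le]
  have h3 := one_sub_acc (U := U) ε x (propo U ε x z)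
  have h4 : |ell U ε x (propo U ε x z)| ≤ |trap U x (propo U ε x z)|
      + ε / 4 * |‖gradient U x‖ ^ 2 - ‖gradient U (propo U ε x z)‖ ^ 2| := by
    rw [ell_eq hε]
    refine (abs_add_le _ _).trans ?_
    rw [abs_mul, abs_of_pos (by positivity : 0 < ε / 4)]
  have h5 : 0 ≤ 1 - acc U ε x (propo U ε x z) := by
    linarith [acc_le_one (U := U) ε x (propo U ε x z)]
  simp only [GG]
  rw [div_le_iff₀ (by positivity)]
  calc _ ≤ (ε * bb L (x, z) ^ 2) * (|trap U x (propo U ε x z)|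
      + ε / 4 * |‖gradient U x‖ ^ 2 - ‖gradient U (propo U ε x z)‖ ^ 2|) := by
        gcongr
        exact h3.trans h4
    _ = _ := by field_simp

lemma GG_dom (h : StrongAssumption U m L) {ε : ℝ} (hε : 0 < ε) (hε1 : ε ≤ 1) (p : Euc d × Euc d) :
    GG U ε p ≤ (3 * L / 2 + L ^ 2 / 4) * bb L p ^ 4 := by
  have hL : 0 < L := h.2.1.trans_le h.2.2.1
  refine (GG_le h hε hε1 p).trans ?_
  obtain ⟨x, z⟩ := p
  have h1 := propo_sub h hε hε1 x z
  have hb0 : 0 ≤ bb L (x, z) := by unfold bb; positivity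
  set y := propo U ε x z
  set b := bb L (x, z)
  have h2 : ‖y - x‖ ^ 2 ≤ ε * b ^ 2 := by
    calc _ ≤ (Real.sqrt ε * b) ^ 2 := by gcongr
      _ = _ := by rw [mul_pow, Real.sq_sqrt hε.le]
  have h3 : ‖y - x‖ ≤ b := h1.trans (mul_le_of_le_one_left hb0 (Real.sqrt_le_one.2 hε1))
  have h4 : |trap U x y| / ε ≤ L * b ^ 2 := by
    rw [div_le_iff₀ hε]
    refine (trap_bound h x y).trans ?_
    nlinarith
  have h5 : ‖gradient U x‖ ≤ b := by
    refine (sa_grad_le h x).trans ?_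
    simp only [b, bb]; linarith [norm_nonneg z]
  have h6 : |‖gradient U x‖ - ‖gradient U y‖| ≤ L * b := by
    refine (abs_norm_sub_norm_le _ _).trans ?_
    refine (sa_lip h x y).trans ?_
    rw [norm_sub_rev]; gcongr
  have h7 : ‖gradient U y‖ ≤ b + L * b := by
    have := (abs_le.1 h6).1; linarith
  have h8 : |‖gradient U x‖ ^ 2 - ‖gradient U y‖ ^ 2| ≤ (L * b) * (2 * b + L * b) := by
    rw [sq_sub_sq, abs_mul, mul_comm]
    rw [abs_of_nonneg (by positivity : 0 ≤ ‖gradient U x‖ + ‖gradient U y‖)]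
    have : ‖gradient U x‖ + ‖gradient U y‖ ≤ 2 * b + L * b := by linarith
    gcongr
  calc _ ≤ b ^ 2 * (L * b ^ 2 + 1 / 4 * ((L * b) * (2 * b + L * b))) := by gcongr
    _ = _ := by ring

lemma GG_tendsto (h : StrongAssumption U m L) (p : Euc d × Euc d)
    (hx : DifferentiableAt ℝ (gradient U) p.1) :
    Tendsto (fun ε => GG U ε p) (𝓝[>] 0) (𝓝 0) := by
  obtain ⟨x, z⟩ := p
  simp only at hx
  have hL : 0 < L := h.2.1.trans_le h.2.2.1
  have hb0 : 0 ≤ bb L (x, z) := by unfold bb; positivity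
  have hgc := sa_cont h
  have hpos : ∀ᶠ ε : ℝ in 𝓝[>] 0, 0 < ε := eventually_mem_nhdsWithin
  have hle : ∀ᶠ ε : ℝ in 𝓝[>] 0, ε ≤ 1 :=
    (eventually_le_nhds (by norm_num : (0 : ℝ) < 1)).filter_mono nhdsWithin_le_nhds
  have hy : Tendsto (fun ε => propo U ε x z) (𝓝[>] 0) (𝓝 x) := by
    have : Continuous fun ε => propo U ε x z := by unfold propo; fun_prop
    have h0 := this.tendsto 0
    have e : propo U 0 x z = x := by simp [propo]
    rw [e] at h0
    exact h0.mono_left nhdsWithin_le_nhds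
  have t2 : Tendsto (fun ε => 1 / 4 * |‖gradient U x‖ ^ 2 - ‖gradient U (propo U ε x z)‖ ^ 2|)
      (𝓝[>] 0) (𝓝 0) := by
    have hc : Continuous fun y => 1 / 4 * |‖gradient U x‖ ^ 2 - ‖gradient U y‖ ^ 2| := by fun_prop
    have := (hc.tendsto x).comp hy
    simpa [Function.comp_def] using this
  have t1 : Tendsto (fun ε => |trap U x (propo U ε x z)| / ε) (𝓝[>] 0) (𝓝 0) := by
    rw [Metric.tendsto_nhds]
    intro σ hσ
    set κ := σ / (2 * (bb L (x, z) ^ 2 + 1) * 2) with hκ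
    have hκ0 : 0 < κ := by positivity
    obtain ⟨r, hr, hr2⟩ := trap_little h hx hκ0
    have hv : ∀ᶠ ε : ℝ in 𝓝[>] 0, ‖propo U ε x z - x‖ < r := by
      have := Metric.tendsto_nhds.1 hy r hr
      simpa only [dist_eq_norm] using this
    filter_upwards [hv, hpos, hle] with ε hv hε hε1
    have h1 := hr2 _ hv
    rw [add_sub_cancel] at h1
    have h2 : ‖propo U ε x z - x‖ ^ 2 ≤ ε * bb L (x, z) ^ 2 := by
      have := propo_sub h hε hε1 x z
      calc _ ≤ (Real.sqrt ε * bb L (x, z)) ^ 2 := by gcongr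
        _ = _ := by rw [mul_pow, Real.sq_sqrt hε.le]
    rw [dist_zero_right, Real.norm_eq_abs, abs_of_nonneg (by positivity), div_lt_iff₀ hε]
    calc _ ≤ 2 * κ * (ε * bb L (x, z) ^ 2) := h1.trans (by gcongr)
      _ = σ * ε * (bb L (x, z) ^ 2 / ((bb L (x, z) ^ 2 + 1) * 2)) := by
          rw [hκ]; field_simp
      _ < σ * ε * 1 := by
          gcongr
          rw [div_lt_one (by positivity)]
          nlinarith [sq_nonneg (bb L (x, z))]
      _ = _ := by ring
  have t3 := (t1.add t2).const_mul (bb L (x, z) ^ 2)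
  rw [add_zero, mul_zero] at t3
  refine squeeze_zero' (Eventually.of_forall fun ε => GG_nonneg _ _) ?_ t3
  filter_upwards [hpos, hle] with ε hε hε1
  exact GG_le h hε hε1 (x, z)

lemma meas_GG (h : StrongAssumption U m L) (ε : ℝ) : Measurable (GG U ε) := by
  have h1 := (meas_propo h ε).measurable
  have h2 := (meas_acc_propo h ε).measurable
  unfold GG
  fun_prop

lemma bb_int (h : StrongAssumption U m L) :
    Integrable (fun p : Euc d × Euc d => bb L p ^ 4) ((gibbs U).prod (_root_.stdGaussian d)) := by
  have hp := gibbs_prob h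
  have hL : 0 < L := h.2.1.trans_le h.2.2.1
  have h1 := (gibbs_memLp4 h).comp_fst (_root_.stdGaussian d)
  have h2 := (stdG_memLp d 4 (by norm_num)).comp_snd (gibbs U)
  have h3 := (h1.norm.const_mul L).add (h2.norm.const_mul 2)
  have h4 := MemLp.integrable_norm_pow (p := 4) h3 (by norm_num)
  refine h4.congr (Eventually.of_forall fun p => ?_)
  simp only [Pi.add_apply, bb, Function.comp, id, Real.norm_eq_abs]
  rw [abs_of_nonneg (by positivity)]

lemma GG_lint_tendsto (h : StrongAssumption U m L) :
    Tendsto (fun ε => ∫⁻ p, ENNReal.ofReal (GG U ε p) ∂((gibbs U).prod (_root_.stdGaussian d)))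
      (𝓝[>] 0) (𝓝 0) := by
  have hp := gibbs_prob h
  have hpos : ∀ᶠ ε : ℝ in 𝓝[>] 0, 0 < ε := eventually_mem_nhdsWithin
  have hle : ∀ᶠ ε : ℝ in 𝓝[>] 0, ε ≤ 1 :=
    (eventually_le_nhds (by norm_num : (0 : ℝ) < 1)).filter_mono nhdsWithin_le_nhds
  have := tendsto_lintegral_filter_of_dominated_convergence
    (μ := (gibbs U).prod (_root_.stdGaussian d)) (l := 𝓝[>] (0 : ℝ))
    (F := fun ε p => ENNReal.ofReal (GG U ε p)) (f := fun _ => 0)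
    (fun p => ENNReal.ofReal ((3 * L / 2 + L ^ 2 / 4) * bb L p ^ 4))
    (Eventually.of_forall fun ε => (meas_GG h ε).ennreal_ofReal)
    (by
      filter_upwards [hpos, hle] with ε hε hε1
      exact Eventually.of_forall fun p => ENNReal.ofReal_le_ofReal (GG_dom h hε hε1 p))
    (by exact ((bb_int h).const_mul _).lintegral_lt_top.ne)
    (by
      have hae : ∀ᵐ x ∂(gibbs U), DifferentiableAt ℝ (gradient U) x := by
        have h1 := (sa_lipw h).ae_differentiableAt (μ := (volume : Measure (Euc d)))
        rw [gibbs]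
        exact Measure.ae_smul_measure ((withDensity_absolutelyContinuous _ _).ae_le h1) _
      have h2 := (Measure.quasiMeasurePreserving_fst (μ := gibbs U)
        (ν := _root_.stdGaussian d)).ae hae
      filter_upwards [h2] with p hp
      have := (ENNReal.continuous_ofReal.tendsto 0).comp (GG_tendsto h p hp)
      simpa [Function.comp_def] using this)
  simpa using this

/-- the common noise space -/
def malaNoise (d : ℕ) : Measure (Euc d × ℝ) := (_root_.stdGaussian d).prod unif

instance malaNoise_prob (d : ℕ) : IsProbabilityMeasure (malaNoise d) := by
  unfold malaNoise; infer_instance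

lemma mala_dl (h : StrongAssumption U m L) {ε : ℝ} (hε : 0 < ε) :
    eLpNorm (fun p : Euc d × Euc d × ℝ => mala U ε p.1 p.2.1 p.2.2 - propo U ε p.1 p.2.1) 2
      ((gibbs U).prod (malaNoise d)) ^ 2
    = ENNReal.ofReal (ε ^ 2) * ∫⁻ p, ENNReal.ofReal (GG U ε p) ∂((gibbs U).prod (_root_.stdGaussian d)) := by
  have hprob := gibbs_prob h
  have h1 := (meas_propo h ε).measurable
  have h2 := meas_mala h ε
  have hm : Measurable fun p : Euc d × Euc d × ℝ =>
      ‖mala U ε p.1 p.2.1 p.2.2 - propo U ε p.1 p.2.1‖ₑ ^ 2 := by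
    have h2' : Measurable fun p : Euc d × Euc d × ℝ => propo U ε p.1 p.2.1 := by fun_prop
    exact ((h2.sub h2').enorm.pow_const 2)
  rw [eLp2_sq, lintegral_prod _ hm.aemeasurable, lintegral_prod _ (meas_GG h ε).ennreal_ofReal.aemeasurable,
    ← lintegral_const_mul' _ _ (by simp)]
  apply lintegral_congr
  intro x
  rw [malaNoise, lintegral_prod (fun q : Euc d × ℝ => ‖mala U ε x q.1 q.2 - propo U ε x q.1‖ₑ ^ 2)
    (hm.comp measurable_prodMk_left).aemeasurable,
    ← lintegral_const_mul' _ _ (by simp)]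
  apply lintegral_congr
  intro z
  have e : ∀ u : ℝ, ‖mala U ε x z u - propo U ε x z‖ₑ ^ 2
      = if u ≤ acc U ε x (propo U ε x z) then 0 else ‖x - propo U ε x z‖ₑ ^ 2 := by
    intro u
    rw [mala]
    split_ifs <;> simp
  simp only [e]
  rw [lint_unif (acc_nonneg _ _ _) (acc_le_one _ _ _), mul_zero, zero_add, enorm_sq_ofReal,
    ← ENNReal.ofReal_mul (by linarith [acc_le_one (U := U) ε x (propo U ε x z)]),
    ← ENNReal.ofReal_mul (by positivity), GG]
  congr 1
  simp only
  rw [norm_sub_rev]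
  field_simp

lemma mala_small (h : StrongAssumption U m L) {σ : ℝ} (hσ : 0 < σ) :
    ∀ᶠ ε : ℝ in 𝓝[>] 0,
      eLpNorm (fun p : Euc d × Euc d × ℝ => mala U ε p.1 p.2.1 p.2.2 - propo U ε p.1 p.2.1) 2
      ((gibbs U).prod (malaNoise d)) ≤ ENNReal.ofReal (σ * ε) := by
  have hpos : ∀ᶠ ε : ℝ in 𝓝[>] 0, 0 < ε := eventually_mem_nhdsWithin
  have h1 := (GG_lint_tendsto h).eventually (gt_mem_nhds
    (show (0 : ℝ≥0∞) < ENNReal.ofReal (σ ^ 2) from ENNReal.ofReal_pos.2 (by positivity)))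
  filter_upwards [h1, hpos] with ε h1 hε
  rw [← ENNReal.pow_le_pow_left_iff (two_ne_zero), mala_dl h hε,
    ← ENNReal.ofReal_pow (by positivity)]
  calc _ ≤ ENNReal.ofReal (ε ^ 2) * ENNReal.ofReal (σ ^ 2) := by gcongr
    _ = _ := by rw [← ENNReal.ofReal_mul (by positivity)]; congr 1; ring

end MalaPart

/-! ### Second moment of the Gibbs measure and the fine chain -/

section FinePart

variable {d : ℕ} {U : Euc d → ℝ} {m L : ℝ}

lemma eLp2_le_ofReal {α E : Type*} [MeasurableSpace α] [NormedAddCommGroup E] {f : α → E}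
    {μ : Measure α} {a : ℝ} (ha : 0 ≤ a) (h : ∫⁻ x, ‖f x‖ₑ ^ 2 ∂μ ≤ ENNReal.ofReal (a ^ 2)) :
    eLpNorm f 2 μ ≤ ENNReal.ofReal a := by
  rw [← ENNReal.pow_le_pow_left_iff (two_ne_zero), eLp2_sq, ← ENNReal.ofReal_pow ha]
  exact h

lemma lint_le_of_eLp2 {α E : Type*} [MeasurableSpace α] [NormedAddCommGroup E] {f : α → E}
    {μ : Measure α} {a : ℝ} (ha : 0 ≤ a) (h : eLpNorm f 2 μ ≤ ENNReal.ofReal a) :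
    ∫⁻ x, ‖f x‖ₑ ^ 2 ∂μ ≤ ENNReal.ofReal (a ^ 2) := by
  rw [← eLp2_sq, ENNReal.ofReal_pow ha]
  gcongr

lemma eLp2_smul {α : Type*} [MeasurableSpace α] {f : α → Euc d}
    {μ : Measure α} (c : ℝ) {a : ℝ} (hc : 0 ≤ c) (h : eLpNorm f 2 μ ≤ ENNReal.ofReal a) :
    eLpNorm (fun x => c • f x) 2 μ ≤ ENNReal.ofReal (c * a) := by
  have := eLpNorm_const_smul c f 2 μ
  have e : eLpNorm (fun x => c • f x) 2 μ = ‖c‖ₑ * eLpNorm f 2 μ := this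
  rw [e, ENNReal.ofReal_mul hc, Real.enorm_of_nonneg hc]
  gcongr

lemma eLp2_add {α : Type*} [MeasurableSpace α] {f g : α → Euc d}
    {μ : Measure α} {a b : ℝ} (ha : 0 ≤ a) (hb : 0 ≤ b)
    (hf : Measurable f) (hg : Measurable g)
    (h1 : eLpNorm f 2 μ ≤ ENNReal.ofReal a) (h2 : eLpNorm g 2 μ ≤ ENNReal.ofReal b) :
    eLpNorm (fun x => f x + g x) 2 μ ≤ ENNReal.ofReal (a + b) := by
  rw [ENNReal.ofReal_add ha hb]
  exact (eLpNorm_add_le hf.aestronglyMeasurable hg.aestronglyMeasurable (by norm_num)).trans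
    (add_le_add h1 h2)

lemma eLp2_mono {α : Type*} [MeasurableSpace α] {f g : α → Euc d}
    {μ : Measure α} {a c : ℝ} (hc : 0 ≤ c) (hfg : ∀ x, ‖f x‖ ≤ c * ‖g x‖)
    (h1 : eLpNorm g 2 μ ≤ ENNReal.ofReal a) :
    eLpNorm f 2 μ ≤ ENNReal.ofReal (c * a) := by
  refine le_trans (eLpNorm_mono (g := fun x => c • g x) ?_) (eLp2_smul c hc h1)
  intro x
  rw [norm_smul, Real.norm_of_nonneg hc]
  exact hfg x

/-- second moment of the Gibbs measure -/
lemma gibbs_moment (h : StrongAssumption U m L) :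
    ∃ M : ℝ, 0 ≤ M ∧ eLpNorm (id : Euc d → Euc d) 2 (gibbs U) = ENNReal.ofReal M ∧
      m * M ^ 2 ≤ d := by
  have hm := h.2.1
  have hprob := gibbs_prob h
  have hgm := sa_meas h
  have hfin : eLpNorm (id : Euc d → Euc d) 2 (gibbs U) ≠ ∞ :=
    ((gibbs_memLp4 h).mono_exponent (by norm_num)).eLpNorm_ne_top
  refine ⟨(eLpNorm (id : Euc d → Euc d) 2 (gibbs U)).toReal, ENNReal.toReal_nonneg,
    (ENNReal.ofReal_toReal hfin).symm, ?_⟩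
  set M := (eLpNorm (id : Euc d → Euc d) 2 (gibbs U)).toReal with hM
  have hM0 : 0 ≤ M := ENNReal.toReal_nonneg
  have hMe : eLpNorm (id : Euc d → Euc d) 2 (gibbs U) = ENNReal.ofReal M :=
    (ENNReal.ofReal_toReal hfin).symm
  have hsq : ∫⁻ x : Euc d, ‖x‖ₑ ^ 2 ∂(gibbs U) = ENNReal.ofReal (M ^ 2) := by
    have := eLp2_sq (id : Euc d → Euc d) (gibbs U)
    rw [hMe, ← ENNReal.ofReal_pow hM0] at this
    exact this.symm
  have key : ∀ σ > 0, ∀ᶠ ε : ℝ in 𝓝[>] 0, 2 * m * M ^ 2 ≤ 2 * d + ε * (L ^ 2 * M ^ 2) + 2 * M * σ := by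
    intro σ hσ
    have hpos : ∀ᶠ ε : ℝ in 𝓝[>] 0, 0 < ε := eventually_mem_nhdsWithin
    filter_upwards [mala_small h hσ, hpos] with ε hs hε
    have hfac : 0 ≤ 1 - 2 * ε * m + ε ^ 2 * L ^ 2 := by
      have : m ^ 2 ≤ L ^ 2 := by
        have := h.2.2.1
        gcongr
      nlinarith [sq_nonneg (1 - ε * m), sq_nonneg ε]
    set S := (1 - 2 * ε * m + ε ^ 2 * L ^ 2) * M ^ 2 + 2 * ε * d with hS
    have hS0 : 0 ≤ S := by positivity
    have hmp := (meas_propo h ε).measurable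
    have hmm := meas_mala h ε
    have hmp' : Measurable fun p : Euc d × Euc d × ℝ => propo U ε p.1 p.2.1 := by fun_prop
    have hP : eLpNorm (fun p : Euc d × Euc d × ℝ => propo U ε p.1 p.2.1) 2
        ((gibbs U).prod (malaNoise d)) ≤ ENNReal.ofReal (Real.sqrt S) := by
      apply eLp2_le_ofReal (Real.sqrt_nonneg _)
      rw [Real.sq_sqrt hS0, lintegral_prod _ (hmp'.enorm.pow_const 2).aemeasurable]
      calc _ ≤ ∫⁻ x, (ENNReal.ofReal (1 - 2 * ε * m + ε ^ 2 * L ^ 2) * ‖x‖ₑ ^ 2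
              + ENNReal.ofReal (2 * ε * d)) ∂(gibbs U) := by
            apply lintegral_mono
            intro x
            have h1 : ∫⁻ q : Euc d × ℝ, ‖propo U ε x q.1‖ₑ ^ 2 ∂(malaNoise d)
                = ∫⁻ z, ‖propo U ε x z‖ₑ ^ 2 ∂(_root_.stdGaussian d) := by
              have hmx : Measurable fun z => ‖propo U ε x z‖ₑ ^ 2 := by fun_prop
              exact (measurePreserving_fst (μ := _root_.stdGaussian d) (ν := unif)).lintegral_comp hmx
            simp only
            rw [h1]
            simp only [propo]
            rw [stdG_lintegral_affine, enorm_sq_ofReal, ← ENNReal.ofReal_mul hfac,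
              ← ENNReal.ofReal_add (by positivity) (by positivity),
              Real.sq_sqrt (by positivity)]
            apply ENNReal.ofReal_le_ofReal
            have := sa_step h x 0 hε.le
            rw [h.2.2.2.2, sub_zero, sub_zero] at this
            linarith
        _ = _ := by
            rw [lintegral_add_right _ measurable_const, lintegral_const_mul _ (by fun_prop), hsq,
              lintegral_const, measure_univ, mul_one, ← ENNReal.ofReal_mul hfac,
              ← ENNReal.ofReal_add (by positivity) (by positivity)]
    have h1 : ENNReal.ofReal M ≤ ENNReal.ofReal (Real.sqrt S + σ * ε) := by
      rw [← hMe]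
      conv_lhs => rw [← mala_inv h hε]
      rw [eLpNorm_map_measure (by fun_prop) (by exact hmm.aemeasurable)]
      have := eLp2_add (Real.sqrt_nonneg S) (by positivity) hmp' (hmm.sub hmp') hP hs
      refine le_of_eq_of_le ?_ this
      congr 1
      funext p
      simp
    rw [ENNReal.ofReal_le_ofReal_iff (by positivity)] at h1
    have h2 : M ^ 2 - 2 * M * (σ * ε) ≤ S := by
      rcases le_total (σ * ε) M with h3 | h3
      · have : (M - σ * ε) ^ 2 ≤ Real.sqrt S ^ 2 := by
          apply pow_le_pow_left₀ <;> linarith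
        rw [Real.sq_sqrt hS0] at this
        nlinarith [sq_nonneg (σ * ε)]
      · have : 0 < σ * ε := by positivity
        nlinarith
    rw [hS] at h2
    have h4 : ε * (2 * m * M ^ 2) ≤ ε * (2 * d + ε * (L ^ 2 * M ^ 2) + 2 * M * σ) := by nlinarith
    exact le_of_mul_le_mul_left h4 hε
  have key2 : ∀ σ > 0, 2 * m * M ^ 2 ≤ 2 * d + 2 * M * σ := by
    intro σ hσ
    have ht : Tendsto (fun ε : ℝ => 2 * d + ε * (L ^ 2 * M ^ 2) + 2 * M * σ) (𝓝[>] 0)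
        (𝓝 (2 * d + 0 * (L ^ 2 * M ^ 2) + 2 * M * σ)) := by
      refine Tendsto.mono_left (Continuous.tendsto (by fun_prop) 0) nhdsWithin_le_nhds
    have := ge_of_tendsto ht (key σ hσ)
    linarith
  have ht : Tendsto (fun σ : ℝ => 2 * d + 2 * M * σ) (𝓝[>] 0) (𝓝 (2 * d + 2 * M * 0)) :=
    Tendsto.mono_left (Continuous.tendsto (by fun_prop) 0) nhdsWithin_le_nhds
  have := ge_of_tendsto ht (eventually_mem_nhdsWithin.mono key2)
  linarith

lemma gT_eLp (d : ℕ) {t : ℝ} (ht : 0 ≤ t) :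
    eLpNorm (id : Euc d → Euc d) 2 (gT d t) ≤ ENNReal.ofReal (Real.sqrt (t * d)) := by
  apply eLp2_le_ofReal (Real.sqrt_nonneg _)
  rw [gT, lintegral_map (by fun_prop) (by fun_prop), Real.sq_sqrt (by positivity)]
  have := stdG_lintegral_affine d 0 (Real.sqrt t)
  simp only [zero_add, norm_zero] at this
  simp only [id]
  rw [this, Real.sq_sqrt ht]
  simp

set_option maxHeartbeats 1000000 in
lemma fine_chain (h : StrongAssumption U m L) {Ω : Type} [MeasurableSpace Ω] (Γ : Measure Ω)
    [IsProbabilityMeasure Γ] (x0 : Ω → Euc d) (hx0 : Measurable x0) (hΓ : Γ.map x0 = gibbs U)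
    {ε σ η M : ℝ} (hε : 0 < ε) (hσ : 0 < σ) (hM0 : 0 ≤ M)
    (hM : eLpNorm (id : Euc d → Euc d) 2 (gibbs U) = ENNReal.ofReal M)
    (hs : eLpNorm (fun p : Euc d × Euc d × ℝ => mala U ε p.1 p.2.1 p.2.2 - propo U ε p.1 p.2.1) 2
      ((gibbs U).prod (malaNoise d)) ≤ ENNReal.ofReal (σ * ε)) (N : ℕ) (hN : N * ε ≤ η) :
    ∀ j ≤ N, ∃ ρ : Measure (Ω × (Euc d × Euc d)), IsProbabilityMeasure ρ ∧
      ρ.map (fun r => (r.1, r.2.1)) = Γ.prod (gT d (j * ε)) ∧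
      ρ.map (fun r => r.2.2) = gibbs U ∧
      eLpNorm (fun r => (r.2.2 - x0 r.1) + (j * ε) • gradient U (x0 r.1) - Real.sqrt 2 • r.2.1) 2 ρ
        ≤ ENNReal.ofReal (j * ε * (L * (η * L * M + Real.sqrt (2 * η * d)) + σ) * (1 + ε * L) ^ j) := by
  have hm := h.2.1
  have hL : 0 < L := h.2.1.trans_le h.2.2.1
  have hprob := gibbs_prob h
  have hgm := sa_meas h
  have hmp := (meas_propo h ε).measurable
  have hmm := meas_mala h ε
  have hη0 : 0 ≤ η := le_trans (by positivity) hN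
  set B := η * L * M + Real.sqrt (2 * η * d) with hB
  have hB0 : 0 ≤ B := by positivity
  intro j
  induction j with
  | zero =>
    intro _
    have hme : Measurable fun p => ((p, ((0 : Euc d), x0 p)) : Ω × (Euc d × Euc d)) := by fun_prop
    refine ⟨Γ.map fun p => (p, ((0 : Euc d), x0 p)), Measure.isProbabilityMeasure_map hme.aemeasurable, ?_, ?_, ?_⟩
    · rw [Measure.map_map (by fun_prop) hme]
      simp [gT_zero, Measure.prod_dirac, Function.comp_def]
    · rw [Measure.map_map (by fun_prop) hme, ← hΓ]
      rfl
    · rw [eLpNorm_map_measure (by fun_prop) hme.aemeasurable]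
      simp [Function.comp_def]
  | succ j ih =>
    intro hj
    obtain ⟨ρ, hρ, h1, h2, h3⟩ := ih (by omega)
    have hjN : (j : ℝ) * ε ≤ η := by
      have : (j : ℝ) ≤ N := by exact_mod_cast (by omega : j ≤ N)
      exact le_trans (by gcongr) hN
    set T : (Ω × (Euc d × Euc d)) × (Euc d × ℝ) → Ω × (Euc d × Euc d) := fun q =>
      (q.1.1, (q.1.2.1 + Real.sqrt ε • q.2.1, mala U ε q.1.2.2 q.2.1 q.2.2)) with hT
    have hmx : Measurable fun q : (Ω × (Euc d × Euc d)) × (Euc d × ℝ) =>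
        mala U ε q.1.2.2 q.2.1 q.2.2 := by
      have h0 : Measurable fun q : (Ω × (Euc d × Euc d)) × (Euc d × ℝ) =>
        (q.1.2.2, q.2.1, q.2.2) := by fun_prop
      simpa only [Function.comp_def] using hmm.comp h0
    have hpx : Measurable fun q : (Ω × (Euc d × Euc d)) × (Euc d × ℝ) =>
        propo U ε q.1.2.2 q.2.1 := by
      have h0 : Measurable fun q : (Ω × (Euc d × Euc d)) × (Euc d × ℝ) =>
        (q.1.2.2, q.2.1) := by fun_prop
      simpa only [Function.comp_def] using hmp.comp h0
    have hTm : Measurable T := by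
      rw [hT]
      refine Measurable.prodMk (by fun_prop) (Measurable.prodMk (by fun_prop) hmx)
    have hpr : (ρ.prod (malaNoise d)).map (fun q => (q.1.2.2, q.2)) = (gibbs U).prod (malaNoise d) := by
      rw [← h2]
      have := Measure.map_prod_map ρ (malaNoise d) (f := fun r : Ω × (Euc d × Euc d) => r.2.2) (g := id)
        (by fun_prop) measurable_id
      rw [Measure.map_id] at this
      rw [this]
      rfl
    refine ⟨(ρ.prod (malaNoise d)).map T, Measure.isProbabilityMeasure_map hTm.aemeasurable, ?_, ?_, ?_⟩
    · rw [Measure.map_map (by fun_prop) hTm]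
      have e1 : (ρ.prod (malaNoise d)).map (fun q => ((q.1.1, q.1.2.1), q.2.1))
          = (Γ.prod (gT d (j * ε))).prod (_root_.stdGaussian d) := by
        have e0 : (malaNoise d).map Prod.fst = _root_.stdGaussian d := by
          rw [malaNoise, Measure.map_fst_prod]; simp
        rw [← h1, ← e0]
        rw [Measure.map_prod_map _ _ (by fun_prop) (by fun_prop)]
        rfl
      have e2 : ((fun r : Ω × (Euc d × Euc d) => (r.1, r.2.1)) ∘ T) =
          (Prod.map id (fun p : Euc d × Euc d => p.1 + Real.sqrt ε • p.2)) ∘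
            (fun q : (Ω × Euc d) × Euc d => (q.1.1, (q.1.2, q.2))) ∘
            (fun q : (Ω × (Euc d × Euc d)) × (Euc d × ℝ) => ((q.1.1, q.1.2.1), q.2.1)) := rfl
      have e3 : ((Γ.prod (gT d (j * ε))).prod (_root_.stdGaussian d)).map
          (fun q : (Ω × Euc d) × Euc d => (q.1.1, (q.1.2, q.2)))
          = Γ.prod ((gT d (j * ε)).prod (_root_.stdGaussian d)) := by
        exact (measurePreserving_prodAssoc Γ (gT d (j * ε)) (_root_.stdGaussian d)).map_eq
      rw [e2, ← Measure.map_map (by fun_prop) (by fun_prop), ← Measure.map_map (by fun_prop) (by fun_prop),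
        e1, e3, ← Measure.map_prod_map _ _ measurable_id (by fun_prop), Measure.map_id,
        gT_add d (by positivity) hε.le]
      congr 2
      push_cast; ring
    · rw [Measure.map_map (by fun_prop) hTm]
      have e2 : ((fun r : Ω × (Euc d × Euc d) => r.2.2) ∘ T) =
        (fun p : Euc d × Euc d × ℝ => mala U ε p.1 p.2.1 p.2.2) ∘ 
          (fun q : (Ω × (Euc d × Euc d)) × (Euc d × ℝ) => (q.1.2.2, q.2)) := rfl
      rw [e2, ← Measure.map_map hmm (by fun_prop), hpr]
      exact mala_inv h hε
    · rw [eLpNorm_map_measure (by fun_prop) hTm.aemeasurable]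
      set c := L * B + σ with hc
      have hc0 : 0 ≤ c := by positivity
      set e := j * ε * c * (1 + ε * L) ^ j with he
      have he0 : 0 ≤ e := by positivity
      -- lift of functions of `ρ`
      have lift : ∀ f : Ω × (Euc d × Euc d) → Euc d, Measurable f →
          eLpNorm (fun q : (Ω × (Euc d × Euc d)) × (Euc d × ℝ) => f q.1) 2 (ρ.prod (malaNoise d))
            = eLpNorm f 2 ρ := by
        intro f hf
        exact eLpNorm_comp_measurePreserving hf.aestronglyMeasurable
          (measurePreserving_fst (μ := ρ) (ν := malaNoise d))
      have hA : eLpNorm (fun q : (Ω × (Euc d × Euc d)) × (Euc d × ℝ) =>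
          mala U ε q.1.2.2 q.2.1 q.2.2 - propo U ε q.1.2.2 q.2.1) 2 (ρ.prod (malaNoise d))
          ≤ ENNReal.ofReal (σ * ε) := by
        rw [← hpr, eLpNorm_map_measure (by
          have hmp' : Measurable fun p : Euc d × Euc d × ℝ => propo U ε p.1 p.2.1 := by fun_prop
          exact (hmm.sub hmp').aestronglyMeasurable) (by fun_prop)] at hs
        exact hs
      have hx0n : eLpNorm (fun r : Ω × (Euc d × Euc d) => gradient U (x0 r.1)) 2 ρ ≤ ENNReal.ofReal (L * M) := by
        have e1 : (ρ.map (fun r => (r.1, r.2.1))).map Prod.fst = Γ := by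
          rw [h1, Measure.map_fst_prod]; simp
        have e2 : ρ.map (fun r => x0 r.1) = gibbs U := by
          rw [← hΓ]
          conv_rhs => rw [← e1]
          rw [Measure.map_map hx0 measurable_fst, Measure.map_map (hx0.comp measurable_fst) (by fun_prop)]
          rfl
        have e3 : eLpNorm (gradient U) 2 (gibbs U) ≤ ENNReal.ofReal (L * M) :=
          eLp2_mono (g := id) hL.le (fun x => sa_grad_le h x) hM.le
        rw [← e2, eLpNorm_map_measure (by fun_prop) (by fun_prop)] at e3
        exact e3
      have hwn : eLpNorm (fun r : Ω × (Euc d × Euc d) => r.2.1) 2 ρ ≤ ENNReal.ofReal (Real.sqrt (η * d)) := by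
        have e1 : (ρ.map (fun r => (r.1, r.2.1))).map Prod.snd = gT d (j * ε) := by
          rw [h1, Measure.map_snd_prod]; simp
        have e3 := gT_eLp d (t := j * ε) (by positivity)
        rw [← e1, Measure.map_map (by fun_prop) (by fun_prop),
          eLpNorm_map_measure (by fun_prop) (by fun_prop)] at e3
        refine e3.trans (ENNReal.ofReal_le_ofReal (Real.sqrt_le_sqrt (by gcongr)))
      have hdiff : eLpNorm (fun r : Ω × (Euc d × Euc d) => r.2.2 - x0 r.1) 2 ρ ≤ ENNReal.ofReal (e + B) := by
        have f1' : eLpNorm (fun r : Ω × (Euc d × Euc d) => -((j * ε) • gradient U (x0 r.1))) 2 ρ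
            ≤ ENNReal.ofReal (η * L * M) := by
          have : eLpNorm (fun r : Ω × (Euc d × Euc d) => -((j * ε) • gradient U (x0 r.1))) 2 ρ
            = eLpNorm (fun r : Ω × (Euc d × Euc d) => ((j * ε) • gradient U (x0 r.1))) 2 ρ :=
              eLpNorm_neg (fun r : Ω × (Euc d × Euc d) => ((j * ε) • gradient U (x0 r.1))) 2 ρ
          rw [this]
          refine (eLp2_smul (j * ε) (by positivity) hx0n).trans (ENNReal.ofReal_le_ofReal ?_)
          rw [mul_assoc η]
          gcongr
        have f2 := eLp2_smul (Real.sqrt 2) (Real.sqrt_nonneg _) hwn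
        rw [← Real.sqrt_mul (by norm_num), ← mul_assoc] at f2
        have f3 := eLp2_add he0 (by positivity) (by fun_prop) (by fun_prop) h3
          (eLp2_add (by positivity) (Real.sqrt_nonneg _) (by fun_prop) (by fun_prop) f1' f2)
        refine le_of_eq_of_le ?_ f3
        congr 1
        funext r
        abel
      have hgd : eLpNorm (fun r : Ω × (Euc d × Euc d) => ε • (gradient U (x0 r.1) - gradient U r.2.2)) 2 ρ
          ≤ ENNReal.ofReal (ε * (L * (e + B))) := by
        have hle : ∀ r : Ω × (Euc d × Euc d), ‖gradient U (x0 r.1) - gradient U r.2.2‖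
            ≤ L * ‖r.2.2 - x0 r.1‖ := by
          intro r
          rw [norm_sub_rev r.2.2]
          exact sa_lip h _ _
        exact eLp2_smul ε hε.le (eLp2_mono hL.le hle hdiff)
      have mf : Measurable fun r : Ω × (Euc d × Euc d) =>
        (r.2.2 - x0 r.1) + (j * ε) • gradient U (x0 r.1) - Real.sqrt 2 • r.2.1 := by fun_prop
      have mg : Measurable fun r : Ω × (Euc d × Euc d) =>
        ε • (gradient U (x0 r.1) - gradient U r.2.2) := by fun_prop
      have g1 := (lift _ mf).le.trans h3
      have g1' := (lift _ mg).le.trans hgd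
      have hq0 : 0 ≤ ε * (L * (e + B)) := by positivity
      have g2 := eLp2_add (add_nonneg he0 hq0) (by positivity : 0 ≤ σ * ε)
        ((mf.comp measurable_fst).add (mg.comp measurable_fst)) (hmx.sub hpx)
        (eLp2_add he0 hq0 (mf.comp measurable_fst) (mg.comp measurable_fst) g1 g1') hA
      refine le_trans (le_of_eq_of_le ?_ g2) (ENNReal.ofReal_le_ofReal ?_)
      · congr 1
        funext q
        simp only [Function.comp, hT, propo, Pi.add_apply, Pi.sub_apply]
        rw [Real.sqrt_mul (by norm_num)]
        push_cast
        module
      · have hp1 : 1 ≤ (1 + ε * L) ^ (j + 1) := one_le_pow₀ (by nlinarith [mul_pos hε hL])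
        have : e + ε * (L * (e + B)) + σ * ε = (j * ε * c) * (1 + ε * L) ^ (j + 1) + ε * c := by
          rw [he, hc]; ring
        rw [this]
        push_cast
        have h5 : ε * c * 1 ≤ ε * c * (1 + ε * L) ^ (j + 1) := by gcongr
        nlinarith

end FinePart

/-! ### Bernoulli estimates and the PRLMC step -/

section PrlmcPart

variable {d : ℕ} {U : Euc d → ℝ} {m L : ℝ}

lemma fine_chain' (h : StrongAssumption U m L) {Ω : Type} [MeasurableSpace Ω] (Γ : Measure Ω)
    [IsProbabilityMeasure Γ] (x0 : Ω → Euc d) (hx0 : Measurable x0) (hΓ : Γ.map x0 = gibbs U)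
    {σ η M : ℝ} (hη : 0 < η) (hσ : 0 < σ) (hM0 : 0 ≤ M)
    (hM : eLpNorm (id : Euc d → Euc d) 2 (gibbs U) = ENNReal.ofReal M) :
    ∃ ρ : Measure (Ω × (Euc d × Euc d)), IsProbabilityMeasure ρ ∧
      ρ.map (fun r => (r.1, r.2.1)) = Γ.prod (_root_.stdGaussian d) ∧
      ρ.map (fun r => r.2.2) = gibbs U ∧
      eLpNorm (fun r => (r.2.2 - x0 r.1) + η • gradient U (x0 r.1) - Real.sqrt (2 * η) • r.2.1) 2 ρ
        ≤ ENNReal.ofReal (η * (L * (η * L * M + Real.sqrt (2 * η * d)) + σ) * Real.exp (η * L)) := by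
  have hL : 0 < L := h.2.1.trans_le h.2.2.1
  have hgm := sa_meas h
  have ht : Tendsto (fun N : ℕ => η / ((N : ℝ) + 1)) atTop (𝓝[>] 0) := by
    rw [tendsto_nhdsWithin_iff]
    refine ⟨?_, Eventually.of_forall fun N => by simp only [Set.mem_Ioi]; positivity⟩
    have := tendsto_one_div_add_atTop_nhds_zero_nat (𝕜 := ℝ)
    have := this.const_mul η
    simpa [div_eq_mul_inv] using this
  obtain ⟨N, hN⟩ := (ht.eventually (mala_small h hσ)).exists
  set ε := η / ((N : ℝ) + 1) with hε
  have hε0 : 0 < ε := by positivity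
  have hNe : ((N + 1 : ℕ) : ℝ) * ε = η := by
    rw [hε]; push_cast; field_simp
  obtain ⟨ρ, hρ, h1, h2, h3⟩ := fine_chain h Γ x0 hx0 hΓ hε0 hσ hM0 hM hN (N + 1) hNe.le (N + 1) le_rfl
  rw [hNe] at h1 h3
  set T : Ω × (Euc d × Euc d) → Ω × (Euc d × Euc d) := fun r => (r.1, ((Real.sqrt η)⁻¹ • r.2.1, r.2.2)) with hT
  have hTm : Measurable T := by rw [hT]; fun_prop
  have hsq : Real.sqrt η ≠ 0 := (Real.sqrt_pos.2 hη).ne'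
  refine ⟨ρ.map T, Measure.isProbabilityMeasure_map hTm.aemeasurable, ?_, ?_, ?_⟩
  · rw [Measure.map_map (by fun_prop) hTm]
    have e2 : ((fun r : Ω × (Euc d × Euc d) => (r.1, r.2.1)) ∘ T) =
      (Prod.map id fun w : Euc d => (Real.sqrt η)⁻¹ • w) ∘ (fun r : Ω × (Euc d × Euc d) => (r.1, r.2.1)) := rfl
    rw [e2, ← Measure.map_map (by fun_prop) (by fun_prop), h1,
      ← Measure.map_prod_map _ _ measurable_id (by fun_prop), Measure.map_id, gT,
      Measure.map_map (by fun_prop) (by fun_prop)]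
    have : ((fun w : Euc d => (Real.sqrt η)⁻¹ • w) ∘ fun z => Real.sqrt η • z) = id := by
      funext z
      simp [smul_smul, inv_mul_cancel₀ hsq]
    rw [this, Measure.map_id]
  · rw [Measure.map_map (by fun_prop) hTm]
    exact h2
  · rw [eLpNorm_map_measure (by fun_prop) hTm.aemeasurable]
    refine le_trans (le_of_eq_of_le ?_ h3) (ENNReal.ofReal_le_ofReal ?_)
    · congr 1
      funext r
      simp only [Function.comp, hT]
      rw [Real.sqrt_mul (by norm_num), smul_smul, mul_assoc, mul_inv_cancel₀ hsq, mul_one]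
    · have : (1 + ε * L) ^ (N + 1) ≤ Real.exp (η * L) := by
        calc _ ≤ Real.exp (ε * L) ^ (N + 1) := by
              have := Real.add_one_le_exp (ε * L)
              gcongr
              linarith
          _ = _ := by rw [← Real.exp_nat_mul, ← mul_assoc, hNe]
      gcongr

variable {K : ℕ}

lemma bern_prob (hK : 1 ≤ K) : IsProbabilityMeasure (bern (K : ℝ≥0∞)⁻¹) := by
  constructor
  have : (K : ℝ≥0∞)⁻¹ ≤ 1 := by
    rw [ENNReal.inv_le_one]; exact_mod_cast hK
  simp [bern, add_tsub_cancel_of_le this]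

lemma bern_memLp (hK : 1 ≤ K) : MemLp (id : ℝ → ℝ) 2 (bern (K : ℝ≥0∞)⁻¹) := by
  have := bern_prob hK
  refine MemLp.of_bound (by fun_prop) 1 ?_
  rw [bern, ae_add_measure_iff]
  constructor
  · refine Measure.ae_smul_measure ?_ _
    rw [ae_dirac_eq]; simp
  · refine Measure.ae_smul_measure ?_ _
    rw [ae_dirac_eq]; simp

lemma bern_int (hK : 1 ≤ K) (f : ℝ → ℝ) (hf : Measurable f) :
    ∫ x, f x ∂(bern (K : ℝ≥0∞)⁻¹) = (K : ℝ)⁻¹ * f 1 + (1 - (K : ℝ)⁻¹) * f 0 := by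
  have hk : (K : ℝ≥0∞)⁻¹ ≤ 1 := by
    rw [ENNReal.inv_le_one]; exact_mod_cast hK
  rw [bern, integral_add_measure, integral_smul_measure, integral_smul_measure, integral_dirac,
    integral_dirac, ENNReal.toReal_sub_of_le hk (by simp)]
  · simp
  · refine Integrable.smul_measure (integrable_dirac (by simp)) (ne_top_of_le_ne_top (by simp) hk)
  · refine Integrable.smul_measure (integrable_dirac (by simp)) (by simp)

/-- the vector of Bernoulli variables -/
def bernPi (K : ℕ) : Measure (Fin K → ℝ) := Measure.pi fun _ : Fin K => bern (K : ℝ≥0∞)⁻¹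

lemma bernPi_prob (hK : 1 ≤ K) : IsProbabilityMeasure (bernPi K) := by
  have := bern_prob hK
  unfold bernPi; infer_instance

lemma bernPi_eval (hK : 1 ≤ K) (i : Fin K) : MeasurePreserving (fun h : Fin K → ℝ => h i) (bernPi K)
    (bern (K : ℝ≥0∞)⁻¹) := by
  have := bern_prob hK
  exact measurePreserving_eval (fun _ : Fin K => bern (K : ℝ≥0∞)⁻¹) i

lemma bernPi_memLp (hK : 1 ≤ K) (i : Fin K) : MemLp (fun h : Fin K → ℝ => h i) 2 (bernPi K) :=
  (bern_memLp hK).comp_measurePreserving (bernPi_eval hK i)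

lemma bernPi_one (hK : 1 ≤ K) (i : Fin K) : ∫ h, h i ∂(bernPi K) = (K : ℝ)⁻¹ := by
  have e := integral_map (μ := bernPi K) (φ := fun h : Fin K → ℝ => h i)
      (f := fun x => x) (measurable_pi_apply i).aemeasurable (by fun_prop)
  rw [(bernPi_eval hK i).map_eq, bern_int hK _ (by fun_prop)] at e
  rw [← e]; ring

lemma bernPi_two (hK : 1 ≤ K) (i j : Fin K) :
    ∫ h, h i * h j ∂(bernPi K) = ((K : ℝ)⁻¹) ^ 2 + if i = j then (K : ℝ)⁻¹ - ((K : ℝ)⁻¹) ^ 2 else 0 := by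
  have := bern_prob hK
  split_ifs with hij
  · subst hij
    have e := integral_map (μ := bernPi K) (φ := fun h : Fin K → ℝ => h i)
      (f := fun x => x * x) (measurable_pi_apply i).aemeasurable (by fun_prop)
    rw [(bernPi_eval hK i).map_eq, bern_int hK _ (by fun_prop)] at e
    rw [← e]; ring
  · have hind : iIndepFun (fun (i : Fin K) (h : Fin K → ℝ) => h i) (bernPi K) :=
      iIndepFun_pi (X := fun _ => id) (fun _ => aemeasurable_id)
    have := (hind.indepFun hij).integral_fun_mul_eq_mul_integral
      (measurable_pi_apply i).aestronglyMeasurable (measurable_pi_apply j).aestronglyMeasurable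
    rw [this, bernPi_one hK, bernPi_one hK]; ring

lemma bernPi_integrable (hK : 1 ≤ K) (a : Euc d) (v : Fin K → Euc d) :
    Integrable (fun h : Fin K → ℝ => ‖a + ∑ i, h i • v i‖ ^ 2) (bernPi K) := by
  have := bernPi_prob hK
  have h1 : MemLp (fun h : Fin K → ℝ => a + ∑ i, h i • v i) 2 (bernPi K) := by
    refine (memLp_const a).add (memLp_finset_sum _ fun i _ => ?_)
    refine MemLp.of_le_mul (bernPi_memLp hK i) (c := ‖v i‖)
      ((measurable_pi_apply i).smul_const (v i)).aestronglyMeasurable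
      (Eventually.of_forall fun h => ?_)
    rw [norm_smul, mul_comm]
  exact h1.integrable_norm_pow (by norm_num)

lemma bernPi_integral (hK : 1 ≤ K) (a : Euc d) (v : Fin K → Euc d) :
    ∫ h, ‖a + ∑ i, h i • v i‖ ^ 2 ∂(bernPi K)
      ≤ ‖a‖ ^ 2 + 2 * (K : ℝ)⁻¹ * ∑ i, ⟪a, v i⟫ + 2 * (K : ℝ)⁻¹ * ∑ i, ‖v i‖ ^ 2 := by
  have hp := bernPi_prob hK
  have hK0 : (0 : ℝ) < K := by exact_mod_cast hK
  have e : ∀ h : Fin K → ℝ, ‖a + ∑ i, h i • v i‖ ^ 2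
      = ‖a‖ ^ 2 + 2 * ∑ i, h i * ⟪a, v i⟫ + ∑ i, ∑ j, (h i * h j) * ⟪v i, v j⟫ := by
    intro h
    rw [norm_add_sq_real, inner_sum, ← real_inner_self_eq_norm_sq (∑ i, h i • v i), sum_inner]
    simp only [inner_sum, real_inner_smul_left, real_inner_smul_right]
    congr 1
    refine Finset.sum_congr rfl fun i _ => Finset.sum_congr rfl fun j _ => ?_
    ring
  have i1 : ∀ i, Integrable (fun h : Fin K → ℝ => h i * ⟪a, v i⟫) (bernPi K) := fun i =>
    ((bernPi_memLp hK i).integrable (by norm_num)).mul_const _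
  have i2 : ∀ i j, Integrable (fun h : Fin K → ℝ => (h i * h j) * ⟪v i, v j⟫) (bernPi K) := fun i j =>
    ((bernPi_memLp hK i).integrable_mul (bernPi_memLp hK j)).mul_const _
  have j1 : Integrable (fun h : Fin K → ℝ => 2 * ∑ i, h i * ⟪a, v i⟫) (bernPi K) :=
    (integrable_finset_sum _ fun i _ => i1 i).const_mul 2
  have j2 : Integrable (fun h : Fin K → ℝ => ∑ i, ∑ j, (h i * h j) * ⟪v i, v j⟫) (bernPi K) :=
    integrable_finset_sum _ fun i _ => integrable_finset_sum _ fun j _ => i2 i j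
  simp only [e]
  rw [integral_add (by exact (integrable_const _).add j1) j2, integral_add (integrable_const _) j1,
    integral_const_mul, integral_finset_sum _ fun i _ => i1 i,
    integral_finset_sum _ fun i _ => integrable_finset_sum _ fun j _ => i2 i j]
  simp only [integral_finset_sum _ fun j _ => i2 _ j, integral_mul_const, bernPi_one hK, bernPi_two hK]
  simp only [integral_const, probReal_univ, one_smul]
  have s1 : ∑ i, ∑ j, ((K : ℝ)⁻¹ ^ 2 + if i = j then (K : ℝ)⁻¹ - (K : ℝ)⁻¹ ^ 2 else 0) * ⟪v i, v j⟫
      = (K : ℝ)⁻¹ ^ 2 * ‖∑ i, v i‖ ^ 2 + ((K : ℝ)⁻¹ - (K : ℝ)⁻¹ ^ 2) * ∑ i, ‖v i‖ ^ 2 := by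
    rw [← real_inner_self_eq_norm_sq (∑ i, v i), sum_inner]
    simp only [inner_sum, add_mul, Finset.sum_add_distrib, ← Finset.mul_sum, ite_mul, zero_mul,
      Finset.sum_ite_eq, Finset.mem_univ, if_true, real_inner_self_eq_norm_sq]
  have s2 : ‖∑ i, v i‖ ^ 2 ≤ K * ∑ i, ‖v i‖ ^ 2 := by
    have h1 : ‖∑ i, v i‖ ≤ ∑ i, ‖v i‖ := norm_sum_le _ _
    have h2 := sq_sum_le_card_mul_sum_sq (s := Finset.univ) (f := fun i : Fin K => ‖v i‖)
    simp only [Finset.card_univ, Fintype.card_fin] at h2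
    exact (by gcongr : _ ≤ (∑ i, ‖v i‖) ^ 2).trans h2
  rw [s1, ← Finset.mul_sum]
  have s3 : (K : ℝ)⁻¹ ^ 2 * ‖∑ i, v i‖ ^ 2 ≤ (K : ℝ)⁻¹ * ∑ i, ‖v i‖ ^ 2 := by
    calc _ ≤ (K : ℝ)⁻¹ ^ 2 * (K * ∑ i, ‖v i‖ ^ 2) := by gcongr
      _ = _ := by field_simp
  have s4 : 0 ≤ (K : ℝ)⁻¹ ^ 2 * ∑ i, ‖v i‖ ^ 2 := by positivity
  linarith

lemma bernPi_lintegral (hK : 1 ≤ K) (a : Euc d) (v : Fin K → Euc d) :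
    ∫⁻ h, ‖a + ∑ i, h i • v i‖ₑ ^ 2 ∂(bernPi K)
      ≤ ENNReal.ofReal (‖a‖ ^ 2 + 2 * (K : ℝ)⁻¹ * ∑ i, ⟪a, v i⟫ + 2 * (K : ℝ)⁻¹ * ∑ i, ‖v i‖ ^ 2) := by
  simp_rw [enorm_sq_ofReal]
  rw [← ofReal_integral_eq_lintegral_ofReal (bernPi_integrable hK a v)
    (Eventually.of_forall fun _ => by positivity)]
  exact ENNReal.ofReal_le_ofReal (bernPi_integral hK a v)

end PrlmcPart

/-! ### Estimates for one PRLMC step -/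

section StepPart

variable {d : ℕ} {U : Euc d → ℝ} {m L : ℝ} {K : ℕ}

/-- the midpoint Gaussians -/
def gPi (d K : ℕ) : Measure (Fin K → Euc d) := Measure.pi fun _ : Fin K => _root_.stdGaussian d

instance gPi_prob (d K : ℕ) : IsProbabilityMeasure (gPi d K) := by
  unfold gPi; infer_instance

/-- the midpoint correction -/
def corr (U : Euc d → ℝ) (η : ℝ) (K : ℕ) (y : Euc d) (h : Fin K → ℝ) (g : Fin K → Euc d) : Euc d :=
  ∑ i : Fin K, h i • (gradient U y - gradient U (prlmcMid U η K y g i))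

lemma cont_mid (hU : StrongAssumption U m L) (η : ℝ) (i : Fin K) :
    Continuous fun p : Euc d × (Fin K → Euc d) => prlmcMid U η K p.1 p.2 i := by
  have hg := sa_cont hU
  unfold prlmcMid
  fun_prop

lemma cont_corr (hU : StrongAssumption U m L) (η : ℝ) :
    Continuous fun p : Euc d × (Fin K → ℝ) × (Fin K → Euc d) => corr U η K p.1 p.2.1 p.2.2 := by
  have hg := sa_cont hU
  unfold corr
  refine continuous_finset_sum _ fun i _ => ?_
  have h1 : Continuous fun p : Euc d × (Fin K → ℝ) × (Fin K → Euc d) => prlmcMid U η K p.1 p.2.2 i := by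
    have h0 : Continuous fun p : Euc d × (Fin K → ℝ) × (Fin K → Euc d) => (p.1, p.2.2) := by fun_prop
    simpa only [Function.comp_def] using (cont_mid hU η i).comp h0
  fun_prop

lemma step_eq (η : ℝ) (x : Euc d) (h : Fin K → ℝ) (g : Fin K → Euc d) (z : Euc d) :
    prlmcStep U η K x h g z = x - η • gradient U x + η • corr U η K x h g + Real.sqrt (2 * η) • z := rfl

lemma cont_step (hU : StrongAssumption U m L) (η : ℝ) :
    Continuous fun p : Euc d × (Fin K → ℝ) × (Fin K → Euc d) × Euc d =>
      prlmcStep U η K p.1 p.2.1 p.2.2.1 p.2.2.2 := by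
  have hg := sa_cont hU
  simp only [step_eq]
  have h1 : Continuous fun p : Euc d × (Fin K → ℝ) × (Fin K → Euc d) × Euc d =>
      corr U η K p.1 p.2.1 p.2.2.1 := by
    have h0 : Continuous fun p : Euc d × (Fin K → ℝ) × (Fin K → Euc d) × Euc d =>
      (p.1, p.2.1, p.2.2.1) := by fun_prop
    simpa only [Function.comp_def] using (cont_corr hU η).comp h0
  fun_prop

lemma noise_eq (d K : ℕ) : prlmcNoise d K = (bernPi K).prod ((gPi d K).prod (_root_.stdGaussian d)) := rfl

lemma noise_prob (hK : 1 ≤ K) : IsProbabilityMeasure (prlmcNoise d K) := by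
  have := bernPi_prob hK
  rw [noise_eq]; infer_instance

lemma mid_lint (hU : StrongAssumption U m L) {η : ℝ} (hη : 0 ≤ η) (hK : 1 ≤ K) (y : Euc d) (i : Fin K) :
    ∫⁻ g, ‖gradient U y - gradient U (prlmcMid U η K y g i)‖ₑ ^ 2 ∂(gPi d K)
      ≤ ENNReal.ofReal (L ^ 2 * (η ^ 2 * L ^ 2 * ‖y‖ ^ 2 + 2 * (i * η / K) * d)) := by
  have hL : 0 < L := hU.2.1.trans_le hU.2.2.1
  have hK0 : (0 : ℝ) < K := by exact_mod_cast hK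
  set s : ℝ := i * η / K with hs
  have hs0 : 0 ≤ s := by positivity
  have hsη : s ≤ η := by
    rw [hs, div_le_iff₀ hK0, mul_comm]
    have : (i : ℝ) ≤ K := by exact_mod_cast i.2.le
    gcongr
  have hmp := measurePreserving_eval (fun _ : Fin K => _root_.stdGaussian d) i
  calc _ ≤ ∫⁻ g : Fin K → Euc d, ENNReal.ofReal (L ^ 2) * ‖-(s • gradient U y) + Real.sqrt (2 * s) • g i‖ₑ ^ 2 ∂(gPi d K) := by
        apply lintegral_mono
        intro g
        simp only
        rw [enorm_sq_ofReal, enorm_sq_ofReal, ← ENNReal.ofReal_mul (by positivity), ← mul_pow]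
        apply ENNReal.ofReal_le_ofReal
        refine pow_le_pow_left₀ (norm_nonneg _) ?_ 2
        rw [norm_sub_rev]
        refine (sa_lip hU _ _).trans (le_of_eq ?_)
        congr 2
        rw [prlmcMid, hs]
        have : 2 * (i : ℝ) * η / K = 2 * (i * η / K) := by ring
        rw [this]
        abel
    _ = ENNReal.ofReal (L ^ 2) * ENNReal.ofReal (‖-(s • gradient U y)‖ ^ 2 + Real.sqrt (2 * s) ^ 2 * d) := by
        rw [lintegral_const_mul _ (by fun_prop), ← stdG_lintegral_affine]
        congr 1
        have hf : Measurable fun z : Euc d => ‖-(s • gradient U y) + Real.sqrt (2 * s) • z‖ₑ ^ 2 := by fun_prop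
        exact hmp.lintegral_comp hf
    _ ≤ _ := by
        rw [← ENNReal.ofReal_mul (by positivity), norm_neg, norm_smul, Real.norm_of_nonneg hs0,
          Real.sq_sqrt (by positivity)]
        apply ENNReal.ofReal_le_ofReal
        have := sa_grad_le hU y
        have : (s * ‖gradient U y‖) ^ 2 ≤ η ^ 2 * L ^ 2 * ‖y‖ ^ 2 := by
          calc _ ≤ (η * (L * ‖y‖)) ^ 2 := by gcongr
            _ = _ := by ring
        gcongr

lemma sum_fin_id (hK : 1 ≤ K) : ∑ i : Fin K, (i : ℝ) = K * (K - 1) / 2 := by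
  rw [Fin.sum_univ_eq_sum_range (fun i => (i : ℝ)) K]
  have h := Finset.sum_range_id_mul_two K
  have h2 : ((∑ i ∈ Finset.range K, i : ℕ) : ℝ) * 2 = K * (K - 1) := by
    have : (((∑ i ∈ Finset.range K, i) * 2 : ℕ) : ℝ) = ((K * (K - 1) : ℕ) : ℝ) := by rw [h]
    push_cast [Nat.cast_sub hK] at this
    push_cast
    exact this
  push_cast at h2
  linarith

lemma corr_lint (hU : StrongAssumption U m L) {η : ℝ} (hη : 0 ≤ η) (hK : 1 ≤ K) (y : Euc d) :
    ∫⁻ r, ‖corr U η K y r.1 r.2‖ₑ ^ 2 ∂((bernPi K).prod (gPi d K))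
      ≤ ENNReal.ofReal (2 * L ^ 2 * η ^ 2 * L ^ 2 * ‖y‖ ^ 2 + L ^ 2 * (2 - 2 / K) * (η * d)) := by
  have hp := bernPi_prob hK
  have hL : 0 < L := hU.2.1.trans_le hU.2.2.1
  have hK0 : (0 : ℝ) < K := by exact_mod_cast hK
  have hgm := sa_meas hU
  have hm : Measurable fun r : (Fin K → ℝ) × (Fin K → Euc d) => ‖corr U η K y r.1 r.2‖ₑ ^ 2 := by
    have h0 : Continuous fun r : (Fin K → ℝ) × (Fin K → Euc d) => (y, r.1, r.2) := by fun_prop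
    have := ((cont_corr (K := K) hU η).comp h0).measurable
    exact (this.enorm.pow_const 2)
  have hmid : ∀ i : Fin K, Measurable fun g : Fin K → Euc d => 
      ‖gradient U y - gradient U (prlmcMid U η K y g i)‖ₑ ^ 2 := by
    intro i
    have h0 : Continuous fun g : Fin K → Euc d => (y, g) := by fun_prop
    have h1 := ((cont_mid (K := K) hU η i).comp h0).measurable
    exact ((hgm.comp h1).const_sub _).enorm.pow_const 2
  rw [lintegral_prod_symm _ hm.aemeasurable]
  calc _ ≤ ∫⁻ g, ENNReal.ofReal (2 * (K : ℝ)⁻¹) *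
          ∑ i, ‖gradient U y - gradient U (prlmcMid U η K y g i)‖ₑ ^ 2 ∂(gPi d K) := by
        apply lintegral_mono
        intro g
        simp only [corr]
        have := bernPi_lintegral hK 0 fun i => gradient U y - gradient U (prlmcMid U η K y g i)
        simp only [zero_add, inner_zero_left, norm_zero, Finset.sum_const_zero, mul_zero,
          ne_eq, OfNat.ofNat_ne_zero, not_false_eq_true, zero_pow] at this
        refine this.trans (le_of_eq ?_)
        rw [ENNReal.ofReal_mul (by positivity), ENNReal.ofReal_sum_of_nonneg (fun _ _ => by positivity)]
        simp_rw [enorm_sq_ofReal]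
    _ = ENNReal.ofReal (2 * (K : ℝ)⁻¹) *
          ∑ i, ∫⁻ g, ‖gradient U y - gradient U (prlmcMid U η K y g i)‖ₑ ^ 2 ∂(gPi d K) := by
        rw [lintegral_const_mul _ (Finset.measurable_sum _ fun i _ => hmid i),
          lintegral_finset_sum _ fun i _ => hmid i]
    _ ≤ ENNReal.ofReal (2 * (K : ℝ)⁻¹) *
          ∑ i : Fin K, ENNReal.ofReal (L ^ 2 * (η ^ 2 * L ^ 2 * ‖y‖ ^ 2 + 2 * (i * η / K) * d)) := by
        gcongr with i
        exact mid_lint hU hη hK y i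
    _ = _ := by
        rw [← ENNReal.ofReal_sum_of_nonneg (fun _ _ => by positivity),
          ← ENNReal.ofReal_mul (by positivity)]
        congr 1
        rw [← Finset.mul_sum, Finset.sum_add_distrib, Finset.sum_const, Finset.card_univ, Fintype.card_fin]
        have : ∑ i : Fin K, 2 * ((i : ℝ) * η / K) * d = (2 * η / K * d) * ∑ i : Fin K, (i : ℝ) := by
          rw [Finset.mul_sum]
          refine Finset.sum_congr rfl fun i _ => ?_
          ring
        rw [this, sum_fin_id hK, nsmul_eq_mul]
        field_simp

lemma step_contr (hU : StrongAssumption U m L) {η : ℝ} (hη : 0 ≤ η) (hηL : η * L ≤ 1) (hK : 1 ≤ K) (x y : Euc d) :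
    ∫⁻ r, ‖prlmcStep U η K x r.1 r.2.1 r.2.2 - prlmcStep U η K y r.1 r.2.1 r.2.2‖ₑ ^ 2 ∂(prlmcNoise d K)
      ≤ ENNReal.ofReal ((1 - 2 * m * η + 46 * η ^ 2 * L ^ 2) * ‖x - y‖ ^ 2) := by
  have hp := bernPi_prob hK
  have hm := hU.2.1
  have hL : 0 < L := hU.2.1.trans_le hU.2.2.1
  have hK0 : (0 : ℝ) < K := by exact_mod_cast hK
  have hstep : ∀ x, Measurable fun r : (Fin K → ℝ) × (Fin K → Euc d) × Euc d =>
      prlmcStep U η K x r.1 r.2.1 r.2.2 := by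
    intro x
    have h0 : Continuous fun r : (Fin K → ℝ) × (Fin K → Euc d) × Euc d => (x, r.1, r.2.1, r.2.2) := by fun_prop
    exact ((cont_step (K := K) hU η).comp h0).measurable
  have hdm : Measurable fun r : (Fin K → ℝ) × (Fin K → Euc d) × Euc d =>
      ‖prlmcStep U η K x r.1 r.2.1 r.2.2 - prlmcStep U η K y r.1 r.2.1 r.2.2‖ₑ ^ 2 :=
    ((hstep x).sub (hstep y)).enorm.pow_const 2
  rw [noise_eq, lintegral_prod_symm _ hdm.aemeasurable]
  have hpt : ∀ q : (Fin K → Euc d) × Euc d,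
      ∫⁻ h, ‖prlmcStep U η K x h q.1 q.2 - prlmcStep U η K y h q.1 q.2‖ₑ ^ 2 ∂(bernPi K)
      ≤ ENNReal.ofReal ((1 - 2 * m * η + 46 * η ^ 2 * L ^ 2) * ‖x - y‖ ^ 2) := by
    intro q
    obtain ⟨g, z⟩ := q
    set D := gradient U x - gradient U y with hD
    set Di : Fin K → Euc d := fun i => gradient U (prlmcMid U η K x g i) - gradient U (prlmcMid U η K y g i) with hDi
    set r := ‖x - y‖ with hr
    have hr0 : 0 ≤ r := norm_nonneg _
    have e : ∀ h : Fin K → ℝ, prlmcStep U η K x h g z - prlmcStep U η K y h g z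
        = ((x - y) - η • D) + ∑ i, h i • (η • (D - Di i)) := by
      intro h
      simp only [step_eq, corr]
      have : ∑ i, h i • (η • (D - Di i)) = η • (∑ i, h i • (gradient U x - gradient U (prlmcMid U η K x g i))
          - ∑ i, h i • (gradient U y - gradient U (prlmcMid U η K y g i))) := by
        rw [← Finset.sum_sub_distrib, Finset.smul_sum]
        refine Finset.sum_congr rfl fun i _ => ?_
        simp only [hD, hDi]
        module
      rw [this, hD]
      module
    simp only [e]
    refine (bernPi_lintegral hK _ _).trans (ENNReal.ofReal_le_ofReal ?_)
    have hDn : ‖D‖ ≤ L * r := sa_lip hU x y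
    have hbd : ∀ i : Fin K, ‖Di i‖ ≤ 2 * L * r ∧ (m - 4 * η * L ^ 2) * r ^ 2 ≤ ⟪x - y, Di i⟫ := by
      intro i
      set s : ℝ := i * η / K with hs
      have hs0 : 0 ≤ s := by positivity
      have hsη : s ≤ η := by
        rw [hs, div_le_iff₀ hK0, mul_comm]
        have : (i : ℝ) ≤ K := by exact_mod_cast i.2.le
        gcongr
      set X := prlmcMid U η K x g i with hX
      set Y := prlmcMid U η K y g i with hY
      have eXY : X - Y = (x - y) - s • D := by
        simp only [hX, hY, prlmcMid, hD, hs]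
        module
      have hsD : ‖s • D‖ ≤ η * (L * r) := by
        rw [norm_smul, Real.norm_of_nonneg hs0]; gcongr
      have n1 : ‖X - Y‖ ≤ r + η * (L * r) := by
        rw [eXY]; exact (norm_sub_le _ _).trans (by gcongr)
      have n2 : r - η * (L * r) ≤ ‖X - Y‖ := by
        rw [eXY]
        have := norm_sub_norm_le (x - y) (s • D)
        linarith
      have hηr : η * (L * r) ≤ r := by
        rw [← mul_assoc]; exact mul_le_of_le_one_left hr0 hηL
      have n3 : ‖Di i‖ ≤ 2 * L * r := by
        refine (sa_lip hU X Y).trans ?_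
        nlinarith
      refine ⟨n3, ?_⟩
      have n4 : ⟪x - y, Di i⟫ = ⟪Di i, X - Y⟫ + s * ⟪D, Di i⟫ := by
        have : x - y = (X - Y) + s • D := by rw [eXY]; abel
        rw [this, inner_add_left, real_inner_smul_left, real_inner_comm]
      have n5 : m * ‖X - Y‖ ^ 2 ≤ ⟪Di i, X - Y⟫ := sa_mono hU X Y
      have n6 : |⟪D, Di i⟫| ≤ (L * r) * (2 * L * r) :=
        (abs_real_inner_le_norm _ _).trans (by gcongr)
      have n7 : -(η * ((L * r) * (2 * L * r))) ≤ s * ⟪D, Di i⟫ := by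
        have h1 : |s * ⟪D, Di i⟫| ≤ η * ((L * r) * (2 * L * r)) := by
          rw [abs_mul, abs_of_nonneg hs0]; gcongr
        exact (abs_le.1 h1).1
      have n8 : (r - η * (L * r)) ^ 2 ≤ ‖X - Y‖ ^ 2 := pow_le_pow_left₀ (by linarith) n2 2
      have n9 : m * (r - η * (L * r)) ^ 2 ≤ m * ‖X - Y‖ ^ 2 := by gcongr
      have n10 : m * (r ^ 2 - 2 * η * L * r ^ 2) ≤ m * (r - η * (L * r)) ^ 2 := by
        gcongr
        nlinarith [sq_nonneg (η * (L * r))]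
      have n11 : m * (2 * η * L * r ^ 2) ≤ L * (2 * η * L * r ^ 2) := by
        have := hU.2.2.1
        gcongr
      rw [n4]
      nlinarith
    set a := (x - y) - η • D with ha
    have t1 : ‖a‖ ^ 2 = r ^ 2 - 2 * η * ⟪x - y, D⟫ + η ^ 2 * ‖D‖ ^ 2 := by
      rw [ha, norm_sub_sq_real, real_inner_smul_right, norm_smul, mul_pow, Real.norm_eq_abs, sq_abs]
      ring
    have t2 : ∀ i, ⟪a, η • (D - Di i)⟫ ≤ η * ⟪x - y, D⟫ - η * ((m - 4 * η * L ^ 2) * r ^ 2)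
        - η ^ 2 * ‖D‖ ^ 2 + η ^ 2 * (2 * L ^ 2 * r ^ 2) := by
      intro i
      have : ⟪a, η • (D - Di i)⟫ = η * ⟪x - y, D⟫ - η * ⟪x - y, Di i⟫ - η ^ 2 * ‖D‖ ^ 2 + η ^ 2 * ⟪D, Di i⟫ := by
        rw [ha, real_inner_smul_right, inner_sub_left, real_inner_smul_left, inner_sub_right (x - y) D (Di i), inner_sub_right D D (Di i), real_inner_self_eq_norm_sq]
        ring
      rw [this]
      have h1 := (hbd i).2
      have h2 : ⟪D, Di i⟫ ≤ 2 * L ^ 2 * r ^ 2 := by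
        refine (real_inner_le_norm _ _).trans ?_
        calc _ ≤ (L * r) * (2 * L * r) := by gcongr; exact (hbd i).1
          _ = _ := by ring
      gcongr
    have t3 : ∀ i, ‖η • (D - Di i)‖ ^ 2 ≤ η ^ 2 * (9 * L ^ 2 * r ^ 2) := by
      intro i
      rw [norm_smul, Real.norm_of_nonneg hη, mul_pow]
      have : ‖D - Di i‖ ≤ 3 * L * r := (norm_sub_le _ _).trans (by linarith [(hbd i).1])
      gcongr
      calc _ ≤ (3 * L * r) ^ 2 := by gcongr
        _ = _ := by ring
    have t2' := Finset.sum_le_sum fun i (_ : i ∈ (Finset.univ : Finset (Fin K))) => t2 i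
    have t3' := Finset.sum_le_sum fun i (_ : i ∈ (Finset.univ : Finset (Fin K))) => t3 i
    rw [Finset.sum_const, Finset.card_univ, Fintype.card_fin, nsmul_eq_mul] at t2' t3'
    have hcanc : ∀ c : ℝ, 2 * (K : ℝ)⁻¹ * (K * c) = 2 * c := by intro c; field_simp
    have t4 := mul_le_mul_of_nonneg_left t2' (by positivity : 0 ≤ 2 * (K : ℝ)⁻¹)
    have t5 := mul_le_mul_of_nonneg_left t3' (by positivity : 0 ≤ 2 * (K : ℝ)⁻¹)
    rw [hcanc] at t4 t5
    have t6 : 0 ≤ η ^ 2 * ‖D‖ ^ 2 := by positivity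
    have t7 : 0 ≤ η ^ 2 * L ^ 2 * r ^ 2 := by positivity
    rw [t1]
    nlinarith
  calc _ ≤ ∫⁻ q, ENNReal.ofReal ((1 - 2 * m * η + 46 * η ^ 2 * L ^ 2) * ‖x - y‖ ^ 2) ∂((gPi d K).prod (_root_.stdGaussian d)) :=
        lintegral_mono hpt
    _ = _ := by rw [lintegral_const, measure_univ, mul_one]

lemma step_zero (hU : StrongAssumption U m L) {η : ℝ} (hη : 0 ≤ η) (hK : 1 ≤ K) :
    ∃ c : ℝ, 0 ≤ c ∧ eLpNorm (fun r : (Fin K → ℝ) × (Fin K → Euc d) × Euc d =>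
      prlmcStep U η K 0 r.1 r.2.1 r.2.2) 2 (prlmcNoise d K) ≤ ENNReal.ofReal c := by
  have hp := bernPi_prob hK
  have hL : 0 < L := hU.2.1.trans_le hU.2.2.1
  have hK1 : (1 : ℝ) ≤ K := by exact_mod_cast hK
  have hK2 : 0 ≤ 2 - 2 / (K : ℝ) := by
    have : 2 / (K : ℝ) ≤ 2 := div_le_self (by norm_num) hK1
    linarith
  set b := Real.sqrt (L ^ 2 * (2 - 2 / K) * (η * d)) with hb
  have mc : Measurable fun r : (Fin K → ℝ) × (Fin K → Euc d) => corr U η K 0 r.1 r.2 := by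
    have h0 : Continuous fun r : (Fin K → ℝ) × (Fin K → Euc d) => ((0 : Euc d), r.1, r.2) := by fun_prop
    exact ((cont_corr (K := K) hU η).comp h0).measurable
  have h1 : eLpNorm (fun r : (Fin K → ℝ) × (Fin K → Euc d) => corr U η K 0 r.1 r.2) 2
      ((bernPi K).prod (gPi d K)) ≤ ENNReal.ofReal b := by
    apply eLp2_le_ofReal (Real.sqrt_nonneg _)
    rw [Real.sq_sqrt (by positivity)]
    simpa using corr_lint hU hη hK (0 : Euc d)
  have e1 : (prlmcNoise d K).map (fun r => (r.1, r.2.1)) = (bernPi K).prod (gPi d K) := by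
    have h2 : ((gPi d K).prod (_root_.stdGaussian d)).map Prod.fst = gPi d K := by
      rw [Measure.map_fst_prod]; simp
    have := Measure.map_prod_map (bernPi K) ((gPi d K).prod (_root_.stdGaussian d))
      (f := id) (g := Prod.fst) measurable_id measurable_fst
    rw [Measure.map_id, h2] at this
    exact this.symm
  have e2 : (prlmcNoise d K).map (fun r => r.2.2) = _root_.stdGaussian d := by
    have h2 : ((gPi d K).prod (_root_.stdGaussian d)).map Prod.snd = _root_.stdGaussian d := by
      rw [Measure.map_snd_prod]; simp
    have h3 : (prlmcNoise d K).map Prod.snd = (gPi d K).prod (_root_.stdGaussian d) := by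
      rw [noise_eq, Measure.map_snd_prod]; simp
    rw [← h2, ← h3, Measure.map_map (by fun_prop) (by fun_prop)]
    rfl
  rw [← e1, eLpNorm_map_measure mc.aestronglyMeasurable (by fun_prop)] at h1
  have h2 : eLpNorm (id : Euc d → Euc d) 2 (_root_.stdGaussian d) ≤ ENNReal.ofReal
      (eLpNorm (id : Euc d → Euc d) 2 (_root_.stdGaussian d)).toReal := by
    rw [ENNReal.ofReal_toReal (stdG_memLp d 2 (by simp)).eLpNorm_ne_top]
  set b2 := (eLpNorm (id : Euc d → Euc d) 2 (_root_.stdGaussian d)).toReal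
  have hb2 : 0 ≤ b2 := ENNReal.toReal_nonneg
  rw [← e2, eLpNorm_map_measure (by fun_prop) (by fun_prop)] at h2
  have g1 := eLp2_smul η hη h1
  have g2 := eLp2_smul (Real.sqrt (2 * η)) (Real.sqrt_nonneg _) h2
  have mc' : Measurable fun r : (Fin K → ℝ) × (Fin K → Euc d) × Euc d => corr U η K 0 r.1 r.2.1 := by
    have h0 : Measurable fun r : (Fin K → ℝ) × (Fin K → Euc d) × Euc d => (r.1, r.2.1) := by fun_prop
    exact mc.comp h0
  have hb0 : 0 ≤ b := Real.sqrt_nonneg _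
  refine ⟨η * b + Real.sqrt (2 * η) * b2, by positivity, ?_⟩
  refine le_of_eq_of_le ?_ (eLp2_add (by positivity) (by positivity) (mc'.const_smul η) (by fun_prop) g1 g2)
  congr 1
  funext r
  rw [step_eq, hU.2.2.2.2]
  simp

end StepPart

/-! ### Existence and uniqueness of the invariant law -/

section InvPart

variable {d : ℕ} {R : Type} [MeasurableSpace R]

/-- bounded Lipschitz functions -/
def BL (f : Euc d → ℝ) (B l : ℝ) : Prop :=
  (∀ x, |f x| ≤ B) ∧ ∀ x y, |f x - f y| ≤ l * ‖x - y‖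

lemma BL.cont {f : Euc d → ℝ} {B l : ℝ} (h : BL f B l) : Continuous f := by
  have : LipschitzWith (Real.toNNReal l) f := by
    refine LipschitzWith.of_dist_le_mul fun x y => ?_
    rw [Real.dist_eq, dist_eq_norm]
    refine (h.2 x y).trans ?_
    gcongr
    exact Real.le_coe_toNNReal l
  exact this.continuous

lemma BL.integrable {f : Euc d → ℝ} {B l : ℝ} (h : BL f B l) (μ : Measure (Euc d)) [IsProbabilityMeasure μ] :
    Integrable f μ :=
  Integrable.of_bound h.cont.measurable.aestronglyMeasurable B
    (Eventually.of_forall fun x => by simpa using h.1 x)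

/-- contraction hypotheses -/
structure Contr (F : Euc d → R → Euc d) (ν : Measure R) (q c : ℝ) : Prop where
  meas : Measurable fun p : Euc d × R => F p.1 p.2
  q0 : 0 ≤ q
  q1 : q < 1
  c0 : 0 ≤ c
  contr : ∀ x y, ∫⁻ r, ‖F x r - F y r‖ₑ ^ 2 ∂ν ≤ ENNReal.ofReal (q ^ 2 * ‖x - y‖ ^ 2)
  zero : eLpNorm (fun r => F 0 r) 2 ν ≤ ENNReal.ofReal c

variable {F : Euc d → R → Euc d} {ν : Measure R} [IsProbabilityMeasure ν] {q c : ℝ}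

def Qop (F : Euc d → R → Euc d) (ν : Measure R) (f : Euc d → ℝ) (x : Euc d) : ℝ := ∫ r, f (F x r) ∂ν

def Tstep (F : Euc d → R → Euc d) (ν : Measure R) (μ : Measure (Euc d)) : Measure (Euc d) :=
  (μ.prod ν).map fun p => F p.1 p.2

lemma Contr.measx (hF : Contr F ν q c) (x : Euc d) : Measurable (F x) := by
  have h0 : Measurable fun r : R => (x, r) := by fun_prop
  simpa only [Function.comp_def] using hF.meas.comp h0

lemma Contr.top_prob (hF : Contr F ν q c) (μ : Measure (Euc d)) [IsProbabilityMeasure μ] :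
    IsProbabilityMeasure (Tstep F ν μ) :=
  Measure.isProbabilityMeasure_map hF.meas.aemeasurable

lemma Contr.BLQ (hF : Contr F ν q c) {f : Euc d → ℝ} {B l : ℝ} (hl : 0 ≤ l) (h : BL f B l) :
    BL (Qop F ν f) B (q * l) := by
  have hintg : ∀ x, Integrable (fun r => f (F x r)) ν := fun x =>
    Integrable.of_bound (h.cont.measurable.comp (hF.measx x)).aestronglyMeasurable B
      (Eventually.of_forall fun r => by simpa using h.1 _)
  refine ⟨fun x => ?_, fun x y => ?_⟩
  · have := norm_integral_le_of_norm_le_const (μ := ν) (f := fun r => f (F x r)) (C := B)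
      (Eventually.of_forall fun r => by simpa using h.1 _)
    simpa [Qop] using this
  · have hq := hF.q0
    have h2 : eLpNorm (fun r => F x r - F y r) 2 ν ≤ ENNReal.ofReal (q * ‖x - y‖) := by
      refine eLp2_le_ofReal (by positivity) ((hF.contr x y).trans ?_)
      rw [mul_pow]
    have hms : Measurable fun r => F x r - F y r := (hF.measx x).sub (hF.measx y)
    have h1 : ∫⁻ r, ‖F x r - F y r‖ₑ ∂ν ≤ ENNReal.ofReal (q * ‖x - y‖) := by
      rw [← eLpNorm_one_eq_lintegral_enorm]
      exact (eLpNorm_le_eLpNorm_of_exponent_le (by norm_num) hms.aestronglyMeasurable).trans h2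
    have h3 : ‖∫ r, (f (F x r) - f (F y r)) ∂ν‖ₑ ≤ ENNReal.ofReal (q * l * ‖x - y‖) := by
      refine (enorm_integral_le_lintegral_enorm _).trans ?_
      have hle : ∀ r, ‖f (F x r) - f (F y r)‖ₑ ≤ ENNReal.ofReal l * ‖F x r - F y r‖ₑ := by
        intro r
        rw [← ofReal_norm_eq_enorm, ← ofReal_norm_eq_enorm, ← ENNReal.ofReal_mul hl, Real.norm_eq_abs]
        exact ENNReal.ofReal_le_ofReal (h.2 _ _)
      refine (lintegral_mono hle).trans ?_
      rw [lintegral_const_mul _ hms.enorm]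
      refine (mul_le_mul_right h1 _).trans ?_
      rw [← ENNReal.ofReal_mul hl]
      exact le_of_eq (by ring_nf)
    rw [integral_sub (hintg x) (hintg y), ← ofReal_norm_eq_enorm, ENNReal.ofReal_le_ofReal_iff (by positivity)] at h3
    simpa [Qop] using h3

lemma Contr.int_top (hF : Contr F ν q c) {f : Euc d → ℝ} {B l : ℝ} (h : BL f B l)
    (μ : Measure (Euc d)) [IsProbabilityMeasure μ] : ∫ x, f x ∂(Tstep F ν μ) = ∫ x, Qop F ν f x ∂μ := by
  have hm : Measurable fun p : Euc d × R => f (F p.1 p.2) := h.cont.measurable.comp hF.meas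
  unfold Tstep
  rw [integral_map hF.meas.aemeasurable h.cont.measurable.aestronglyMeasurable]
  rw [integral_prod (fun p : Euc d × R => f (F p.1 p.2))]
  · rfl
  · exact Integrable.of_bound hm.aestronglyMeasurable B (Eventually.of_forall fun r => by simpa using h.1 _)

lemma Contr.BLQn (hF : Contr F ν q c) {f : Euc d → ℝ} {B l : ℝ} (hl : 0 ≤ l) (h : BL f B l) (n : ℕ) :
    BL ((Qop F ν)^[n] f) B (q ^ n * l) := by
  have hq := hF.q0
  induction n with
  | zero => simpa using h
  | succ n ih =>
    rw [Function.iterate_succ_apply']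
    have := hF.BLQ (by positivity) ih
    rwa [← mul_assoc, ← pow_succ'] at this

lemma Contr.topn_prob (hF : Contr F ν q c) (n : ℕ) (μ : Measure (Euc d)) [hμ : IsProbabilityMeasure μ] :
    IsProbabilityMeasure ((Tstep F ν)^[n] μ) := by
  induction n with
  | zero => simpa using hμ
  | succ n ih => rw [Function.iterate_succ_apply']; exact hF.top_prob _

lemma Contr.int_topn (hF : Contr F ν q c) {f : Euc d → ℝ} {B l : ℝ} (hl : 0 ≤ l) (h : BL f B l) (n : ℕ)
    (μ : Measure (Euc d)) [hμ : IsProbabilityMeasure μ] :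
    ∫ x, f x ∂((Tstep F ν)^[n] μ) = ∫ x, (Qop F ν)^[n] f x ∂μ := by
  have hq := hF.q0
  induction n generalizing f l with
  | zero => rfl
  | succ n ih =>
    have := hF.topn_prob n μ
    rw [Function.iterate_succ_apply', hF.int_top h, ih (by positivity) (hF.BLQ hl h), Function.iterate_succ_apply]

lemma ext_BL (μ ν : Measure (Euc d)) [IsProbabilityMeasure μ] [IsProbabilityMeasure ν]
    (h : ∀ f B l, 0 ≤ l → BL f B l → ∫ x, f x ∂μ = ∫ x, f x ∂ν) : μ = ν := by
  let μ' : ProbabilityMeasure (Euc d) := ⟨μ, inferInstance⟩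
  let ν' : ProbabilityMeasure (Euc d) := ⟨ν, inferInstance⟩
  have h1 : Tendsto (fun _ : ℕ => μ') atTop (𝓝 ν') := by
    rw [tendsto_iff_forall_lipschitz_integral_tendsto]
    rintro f ⟨C, hC⟩ ⟨L, hL⟩
    have h0 : ∃ B, ∀ x, |f x| ≤ B := by
      refine ⟨C + |f 0|, fun x => ?_⟩
      have h1 := hC x 0
      rw [Real.dist_eq] at h1
      have h2 := abs_add_le (f x - f 0) (f 0)
      rw [sub_add_cancel] at h2
      linarith
    obtain ⟨B, hB⟩ := h0
    have : ∫ x, f x ∂μ = ∫ x, f x ∂ν := h f B L L.2 ⟨hB, fun x y => by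
      have := hL.dist_le_mul x y
      rwa [Real.dist_eq, dist_eq_norm] at this⟩
    change Tendsto (fun _ : ℕ => ∫ x, f x ∂μ) atTop (𝓝 (∫ x, f x ∂ν))
    rw [this]
    exact tendsto_const_nhds
  have h2 := tendsto_nhds_unique h1 tendsto_const_nhds
  exact (congrArg (fun p : ProbabilityMeasure (Euc d) => (p : Measure (Euc d))) h2).symm

lemma Contr.tendsto (hF : Contr F ν q c) {f : Euc d → ℝ} {B l : ℝ} (hl : 0 ≤ l) (h : BL f B l)
    (μ₁ : Measure (Euc d)) [IsProbabilityMeasure μ₁] :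
    Tendsto (fun n => ∫ x, f x ∂((Tstep F ν)^[n] μ₁) - (Qop F ν)^[n] f 0) atTop (𝓝 0) := by
  have e : ∀ n, ∫ x, f x ∂((Tstep F ν)^[n] μ₁) - (Qop F ν)^[n] f 0
      = ∫ x, ((Qop F ν)^[n] f x - (Qop F ν)^[n] f 0) ∂μ₁ := by
    intro n
    rw [hF.int_topn hl h n μ₁, integral_sub ((hF.BLQn hl h n).integrable μ₁) (integrable_const _)]
    simp
  simp_rw [e]
  have hz : (0 : ℝ) = ∫ x : Euc d, (0 : ℝ) ∂μ₁ := by simp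
  rw [hz]
  refine tendsto_integral_of_dominated_convergence (fun _ => 2 * B) (fun n => ?_) (integrable_const _)
    (fun n => ?_) ?_
  · exact ((hF.BLQn hl h n).cont.measurable.sub_const _).aestronglyMeasurable
  · refine Eventually.of_forall fun x => ?_
    have h1 := (hF.BLQn hl h n).1 x
    have h2 := (hF.BLQn hl h n).1 0
    rw [Real.norm_eq_abs]
    exact (abs_sub _ _).trans (by linarith)
  · refine Eventually.of_forall fun x => ?_
    refine squeeze_zero_norm (a := fun n => q ^ n * (l * ‖x‖)) (fun n => ?_) ?_
    · have := (hF.BLQn hl h n).2 x 0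
      rw [Real.norm_eq_abs]
      simpa [mul_assoc] using this
    · simpa using (tendsto_pow_atTop_nhds_zero_of_lt_one hF.q0 hF.q1).mul_const (l * ‖x‖)

lemma Contr.unique (hF : Contr F ν q c) (μ₁ μ₂ : Measure (Euc d)) [IsProbabilityMeasure μ₁]
    [IsProbabilityMeasure μ₂] (h1 : Tstep F ν μ₁ = μ₁) (h2 : Tstep F ν μ₂ = μ₂) : μ₁ = μ₂ := by
  refine ext_BL μ₁ μ₂ fun f B l hl h => ?_
  have t1 := hF.tendsto hl h μ₁
  have t2 := hF.tendsto hl h μ₂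
  simp_rw [Function.iterate_fixed h1] at t1
  simp_rw [Function.iterate_fixed h2] at t2
  have t3 := t1.sub t2
  simp only [sub_sub_sub_cancel_right, sub_self] at t3
  have := tendsto_nhds_unique t3 tendsto_const_nhds
  linarith

lemma Contr.moment (hF : Contr F ν q c) (μ : Measure (Euc d)) [IsProbabilityMeasure μ] {a : ℝ} (ha : 0 ≤ a)
    (h : eLpNorm id 2 μ ≤ ENNReal.ofReal a) : eLpNorm id 2 (Tstep F ν μ) ≤ ENNReal.ofReal (q * a + c) := by
  have hq := hF.q0
  unfold Tstep
  rw [eLpNorm_map_measure measurable_id.aestronglyMeasurable hF.meas.aemeasurable]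
  have m0 : Measurable fun p : Euc d × R => F 0 p.2 := (hF.measx 0).comp measurable_snd
  have m1 : Measurable fun p : Euc d × R => F p.1 p.2 - F 0 p.2 := hF.meas.sub m0
  have b0 : eLpNorm (fun p : Euc d × R => F 0 p.2) 2 (μ.prod ν) ≤ ENNReal.ofReal c := by
    have : (fun p : Euc d × R => F 0 p.2) = (fun r => F 0 r) ∘ Prod.snd := rfl
    rw [this, ← eLpNorm_map_measure (hF.measx 0).aestronglyMeasurable measurable_snd.aemeasurable,
      Measure.map_snd_prod]
    simpa using hF.zero
  have b1 : eLpNorm (fun p : Euc d × R => F p.1 p.2 - F 0 p.2) 2 (μ.prod ν) ≤ ENNReal.ofReal (q * a) := by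
    refine eLp2_le_ofReal (by positivity) ?_
    have m2 : Measurable fun p : Euc d × R => ‖F p.1 p.2 - F 0 p.2‖ₑ ^ 2 := m1.enorm.pow_const 2
    rw [lintegral_prod (fun p : Euc d × R => ‖F p.1 p.2 - F 0 p.2‖ₑ ^ 2) m2.aemeasurable]
    have hle : ∀ x, ∫⁻ r, ‖F x r - F 0 r‖ₑ ^ 2 ∂ν ≤ ENNReal.ofReal (q ^ 2) * ‖x‖ₑ ^ 2 := by
      intro x
      refine (hF.contr x 0).trans (le_of_eq ?_)
      rw [sub_zero, ENNReal.ofReal_mul (by positivity), ENNReal.ofReal_pow (norm_nonneg x), ofReal_norm_eq_enorm]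
    refine (lintegral_mono hle).trans ?_
    rw [lintegral_const_mul _ (measurable_enorm.pow_const 2), mul_pow, ENNReal.ofReal_mul (by positivity)]
    gcongr
    have := lint_le_of_eLp2 ha h
    simpa using this
  have := eLp2_add (by positivity) hF.c0 m1 m0 b1 b0
  convert this using 2
  ext1 p
  simp

lemma Contr.momentn (hF : Contr F ν q c) (n : ℕ) :
    eLpNorm id 2 ((Tstep F ν)^[n] (Measure.dirac 0)) ≤ ENNReal.ofReal (c / (1 - q)) := by
  have hq := hF.q1
  have hq' : 0 < 1 - q := by linarith
  have hc := hF.c0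
  induction n with
  | zero => simp
  | succ n ih =>
    have := hF.topn_prob n (Measure.dirac 0)
    rw [Function.iterate_succ_apply']
    refine (hF.moment _ (by positivity) ih).trans (le_of_eq ?_)
    congr 1
    field_simp
    ring

lemma Contr.exists (hF : Contr F ν q c) : ∃ μ : Measure (Euc d), IsProbabilityMeasure μ ∧ Tstep F ν μ = μ ∧
    eLpNorm id 2 μ ≤ ENNReal.ofReal (c / (1 - q)) := by
  have hq' : 0 < 1 - q := by linarith [hF.q1]
  have hc := hF.c0
  set C := c / (1 - q) with hC
  have hC0 : 0 ≤ C := by positivity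
  let p : ℕ → ProbabilityMeasure (Euc d) := fun n => ⟨(Tstep F ν)^[n] (Measure.dirac 0), hF.topn_prob n _⟩
  have hmom : ∀ n, ∫⁻ x, ‖x‖ₑ ^ 2 ∂(p n : Measure (Euc d)) ≤ ENNReal.ofReal (C ^ 2) := by
    intro n
    have := lint_le_of_eLp2 hC0 (hF.momentn n)
    exact this
  have htight : IsTightMeasureSet {((μ : ProbabilityMeasure (Euc d)) : Measure (Euc d)) | μ ∈ Set.range p} := by
    refine isTightMeasureSet_of_tendsto_measure_norm_gt ?_
    have hb : ∀ᶠ r : ℝ in atTop, (⨆ μ ∈ {((μ : ProbabilityMeasure (Euc d)) : Measure (Euc d)) | μ ∈ Set.range p},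
        μ {x | r < ‖x‖}) ≤ ENNReal.ofReal (C ^ 2 / r ^ 2) := by
      filter_upwards [eventually_gt_atTop 0] with r hr
      refine iSup₂_le ?_
      rintro _ ⟨_, ⟨n, rfl⟩, rfl⟩
      have h1 : ENNReal.ofReal (r ^ 2) * (p n : Measure (Euc d)) {x | r < ‖x‖} ≤ ENNReal.ofReal (C ^ 2) := by
        refine le_trans ?_ (hmom n)
        refine le_trans ?_ (mul_meas_ge_le_lintegral₀ (measurable_enorm.pow_const 2).aemeasurable (ENNReal.ofReal (r ^ 2)))
        gcongr
        rename_i x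
        intro hx
        rw [← ofReal_norm_eq_enorm, ← ENNReal.ofReal_pow (norm_nonneg _)]
        exact ENNReal.ofReal_le_ofReal (by gcongr)
      rw [ENNReal.ofReal_div_of_pos (by positivity), ENNReal.le_div_iff_mul_le (by left; simp; positivity) (by left; simp), mul_comm]
      exact h1
    refine tendsto_of_tendsto_of_tendsto_of_le_of_le' tendsto_const_nhds ?_ (Eventually.of_forall fun _ => bot_le) hb
    rw [← ENNReal.ofReal_zero]
    refine ENNReal.tendsto_ofReal ?_
    exact tendsto_const_nhds.div_atTop (tendsto_pow_atTop (by norm_num))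
  have hcomp := isCompact_closure_of_isTightMeasureSet htight
  obtain ⟨μ, -, hμ⟩ := hcomp.exists_mapClusterPt (f := atTop) (u := p)
    (by simp only [le_principal_iff, mem_map]; exact Eventually.of_forall fun n => subset_closure ⟨n, rfl⟩)
  refine ⟨μ, inferInstance, ?_, ?_⟩
  · have := hF.top_prob (μ : Measure (Euc d))
    refine ext_BL _ _ fun f B l hl h => ?_
    rw [hF.int_top h]
    have hQ := hF.BLQ hl h
    let f' : BoundedContinuousFunction (Euc d) ℝ := BoundedContinuousFunction.ofNormedAddCommGroup f h.cont B (by simpa using h.1)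
    let g' : BoundedContinuousFunction (Euc d) ℝ := BoundedContinuousFunction.ofNormedAddCommGroup _ hQ.cont B (by simpa using hQ.1)
    have hcont : Continuous fun μ : ProbabilityMeasure (Euc d) => ∫ x, g' x ∂(μ : Measure (Euc d)) - ∫ x, f' x ∂(μ : Measure (Euc d)) :=
      (ProbabilityMeasure.continuous_integral_boundedContinuousFunction g').sub
        (ProbabilityMeasure.continuous_integral_boundedContinuousFunction f')
    have h1 := hμ.continuousAt_comp hcont.continuousAt
    have h2 : Tendsto ((fun μ : ProbabilityMeasure (Euc d) => ∫ x, g' x ∂(μ : Measure (Euc d)) - ∫ x, f' x ∂(μ : Measure (Euc d))) ∘ p) atTop (𝓝 0) := by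
      have t1 := hF.tendsto hl h (Measure.dirac 0)
      have hp := hF.top_prob (Measure.dirac 0)
      have t2 := hF.tendsto hl h (Tstep F ν (Measure.dirac 0))
      have t3 := t2.sub t1
      simp only [sub_sub_sub_cancel_right, sub_self] at t3
      refine t3.congr fun n => ?_
      have := hF.topn_prob n (Measure.dirac 0)
      rw [← Function.iterate_succ_apply, Function.iterate_succ_apply', hF.int_top h]
      rfl
    have h3 := eq_of_nhds_neBot (NeBot.mono h1 (inf_le_inf_left _ h2))
    have h4 : ∫ x, Qop F ν f x ∂(μ : Measure (Euc d)) - ∫ x, f x ∂(μ : Measure (Euc d)) = 0 := h3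
    linarith
  · refine eLp2_le_ofReal hC0 ?_
    have hb : ∀ N : ℕ, ∫⁻ x, ENNReal.ofReal (min (‖x‖ ^ 2) N) ∂(μ : Measure (Euc d)) ≤ ENNReal.ofReal (C ^ 2) := by
      intro N
      have hnn : ∀ x : Euc d, 0 ≤ min (‖x‖ ^ 2) (N : ℝ) := fun x => by positivity
      have hcg : Continuous fun x : Euc d => min (‖x‖ ^ 2) (N : ℝ) := by fun_prop
      let g' : BoundedContinuousFunction (Euc d) ℝ := BoundedContinuousFunction.ofNormedAddCommGroup
        (fun x : Euc d => min (‖x‖ ^ 2) (N : ℝ)) hcg N (fun x => by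
          rw [Real.norm_of_nonneg (hnn x)]; exact min_le_right _ _)
      have hcont : Continuous fun μ : ProbabilityMeasure (Euc d) => ∫ x, g' x ∂(μ : Measure (Euc d)) :=
        ProbabilityMeasure.continuous_integral_boundedContinuousFunction g'
      have hconv : ∀ μ : ProbabilityMeasure (Euc d), ENNReal.ofReal (∫ x, g' x ∂(μ : Measure (Euc d)))
          = ∫⁻ x, ENNReal.ofReal (min (‖x‖ ^ 2) N) ∂(μ : Measure (Euc d)) := fun μ =>
        ofReal_integral_eq_lintegral_ofReal (g'.integrable _) (Eventually.of_forall hnn)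
      have hpn : ∀ n, ∫ x, g' x ∂(p n : Measure (Euc d)) ≤ C ^ 2 := by
        intro n
        rw [← ENNReal.ofReal_le_ofReal_iff (by positivity), hconv]
        refine le_trans (lintegral_mono fun x => ?_) (hmom n)
        rw [enorm_sq_ofReal]
        exact ENNReal.ofReal_le_ofReal (min_le_left _ _)
      rw [← hconv]
      refine ENNReal.ofReal_le_ofReal ?_
      by_contra! hlt
      obtain ⟨n, hn⟩ := (hμ.frequently (hcont.continuousAt.eventually (lt_mem_nhds hlt))).exists
      exact absurd (hpn n) (not_le.2 hn)
    have ht := lintegral_tendsto_of_tendsto_of_monotone (μ := (μ : Measure (Euc d)))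
      (f := fun (N : ℕ) (x : Euc d) => ENNReal.ofReal (min (‖x‖ ^ 2) (N : ℝ))) (F := fun x => ‖id x‖ₑ ^ 2)
      (fun N => by fun_prop)
      (Eventually.of_forall fun x => fun a b hab => ENNReal.ofReal_le_ofReal (by gcongr))
      (Eventually.of_forall fun x => by
        rw [enorm_sq_ofReal]
        refine tendsto_const_nhds.congr' ?_
        obtain ⟨N, hN⟩ := exists_nat_ge (‖x‖ ^ 2)
        filter_upwards [eventually_ge_atTop N] with k hk
        rw [min_eq_left (hN.trans (by exact_mod_cast hk))]
        rfl)
    exact le_of_tendsto' ht hb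

end InvPart

/-! ### One coupled step -/

section CouplePart

variable {d : ℕ} {U : Euc d → ℝ} {m L : ℝ} {K : ℕ}

/-- the PRLMC map on the noise space -/
def stepF (U : Euc d → ℝ) (η : ℝ) (K : ℕ) (x : Euc d) (r : (Fin K → ℝ) × (Fin K → Euc d) × Euc d) : Euc d :=
  prlmcStep U η K x r.1 r.2.1 r.2.2

lemma stepF_meas (hU : StrongAssumption U m L) (η : ℝ) :
    Measurable fun p : Euc d × ((Fin K → ℝ) × (Fin K → Euc d) × Euc d) => stepF U η K p.1 p.2 :=
  (cont_step hU η).measurable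

lemma bind_eq (hU : StrongAssumption U m L) (η : ℝ) (hK : 1 ≤ K) (μ : Measure (Euc d)) [IsProbabilityMeasure μ] :
    μ.bind (prlmcKernel U η K) = Tstep (stepF U η K) (prlmcNoise d K) μ := by
  have hp := noise_prob (d := d) hK
  have hF := stepF_meas (K := K) hU η
  have hFx : ∀ x, Measurable (stepF U η K x) := by
    intro x
    have h0 : Measurable fun r : (Fin K → ℝ) × (Fin K → Euc d) × Euc d => (x, r) := by fun_prop
    simpa only [Function.comp_def] using hF.comp h0
  have hk : ∀ x s, MeasurableSet s → prlmcKernel U η K x s = prlmcNoise d K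
      (Prod.mk x ⁻¹' ((fun p : Euc d × ((Fin K → ℝ) × (Fin K → Euc d) × Euc d) => stepF U η K p.1 p.2) ⁻¹' s)) := by
    intro x s hs
    exact Measure.map_apply (hFx x) hs
  have hmk : Measurable (prlmcKernel U η K) := by
    refine Measure.measurable_of_measurable_coe _ fun s hs => ?_
    simp_rw [fun x => hk x s hs]
    exact measurable_measure_prodMk_left (hF hs)
  ext s hs
  rw [Measure.bind_apply hs hmk.aemeasurable, Tstep, Measure.map_apply hF hs, Measure.prod_apply (hF hs)]
  simp_rw [fun x => hk x s hs]

lemma reorder (hK : 1 ≤ K) (μ : Measure (Euc d)) [IsProbabilityMeasure μ] :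
    ((μ.prod (_root_.stdGaussian d)).prod ((bernPi K).prod (gPi d K))).map
      (fun q : (Euc d × Euc d) × ((Fin K → ℝ) × (Fin K → Euc d)) => (q.1.1, (q.2.1, (q.2.2, q.1.2))))
      = μ.prod (prlmcNoise d K) := by
  have hp := bernPi_prob hK
  have hG := stdG_prob d
  have h1 := measurePreserving_prodAssoc μ (_root_.stdGaussian d) ((bernPi K).prod (gPi d K))
  have h2 : MeasurePreserving (Prod.swap) ((_root_.stdGaussian d).prod ((bernPi K).prod (gPi d K)))
      (((bernPi K).prod (gPi d K)).prod (_root_.stdGaussian d)) := ⟨measurable_swap, Measure.prod_swap⟩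
  have h3 := measurePreserving_prodAssoc (bernPi K) (gPi d K) (_root_.stdGaussian d)
  have h4 := (h3.comp h2)
  have h5 := ((MeasurePreserving.id μ).prod h4).comp h1
  rw [noise_eq]
  exact h5.map_eq

lemma couple_step (hU : StrongAssumption U m L) {η : ℝ} (hη : 0 < η) (hη2 : 2 * η * m ≤ 1) (hK : 1 ≤ K)
    (μ : Measure (Euc d)) [IsProbabilityMeasure μ] (hμ : Tstep (stepF U η K) (prlmcNoise d K) μ = μ)
    {M σ w : ℝ} (hM0 : 0 ≤ M) (hM : eLpNorm (id : Euc d → Euc d) 2 (gibbs U) = ENNReal.ofReal M)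
    (hσ : 0 < σ) (hw : 0 ≤ w) (Γ : Measure (Euc d × Euc d)) (h1 : Γ.map Prod.fst = μ)
    (h2 : Γ.map Prod.snd = gibbs U) (hΓ : eLpNorm (fun p : Euc d × Euc d => p.1 - p.2) 2 Γ ≤ ENNReal.ofReal w) :
    ∃ Γ' : Measure (Euc d × Euc d), Γ'.map Prod.fst = μ ∧ Γ'.map Prod.snd = gibbs U ∧
      eLpNorm (fun p : Euc d × Euc d => p.1 - p.2) 2 Γ' ≤ ENNReal.ofReal
        ((1 - η * m + η ^ 2 * L ^ 2) * w
          + η * (Real.sqrt 2 * L ^ 2 * η * (w + M) + L * Real.sqrt (2 - 2 / K) * Real.sqrt (η * d))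
          + η * (L * (η * L * M + Real.sqrt (2 * η * d)) + σ) * Real.exp (η * L)) := by
  have hp := bernPi_prob hK
  have hG := stdG_prob d
  have hL : 0 < L := hU.2.1.trans_le hU.2.2.1
  have hK1 : (1 : ℝ) ≤ K := by exact_mod_cast hK
  have hK2 : 0 ≤ 2 - 2 / (K : ℝ) := by
    have : 2 / (K : ℝ) ≤ 2 := div_le_self (by norm_num) hK1
    linarith
  have hgm := sa_meas hU
  have hGp : IsProbabilityMeasure Γ := by
    constructor
    have : Γ.map Prod.fst Set.univ = 1 := by rw [h1]; simp
    rwa [Measure.map_apply measurable_fst MeasurableSet.univ] at this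
  obtain ⟨ρ, hρ, hρ1, hρ2, hρ3⟩ := fine_chain' hU Γ Prod.snd measurable_snd h2 hη hσ hM0 hM
  have hρf : ρ.map Prod.fst = Γ := by
    have : ρ.map Prod.fst = (ρ.map (fun r => (r.1, r.2.1))).map Prod.fst := by
      rw [Measure.map_map measurable_fst (by fun_prop)]
      rfl
    rw [this, hρ1, Measure.map_fst_prod]
    simp
  have hρz : ρ.map (fun r => (r.1.1, r.2.1)) = μ.prod (_root_.stdGaussian d) := by
    have : ρ.map (fun r => (r.1.1, r.2.1)) = (ρ.map (fun r => (r.1, r.2.1))).map (Prod.map Prod.fst id) := by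
      rw [Measure.map_map (by fun_prop) (by fun_prop)]
      rfl
    rw [this, hρ1, ← Measure.map_prod_map Γ _ measurable_fst measurable_id, h1, Measure.map_id]
  have hst : Measurable fun q : ((Euc d × Euc d) × (Euc d × Euc d)) × ((Fin K → ℝ) × (Fin K → Euc d)) =>
      stepF U η K q.1.1.1 (q.2.1, (q.2.2, q.1.2.1)) := by
    have h0 : Measurable fun q : ((Euc d × Euc d) × (Euc d × Euc d)) × ((Fin K → ℝ) × (Fin K → Euc d)) =>
      (q.1.1.1, (q.2.1, (q.2.2, q.1.2.1))) := by fun_prop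
    simpa only [Function.comp_def] using (stepF_meas hU η).comp h0
  set N := (bernPi K).prod (gPi d K) with hN
  have hΦ : Measurable fun q : ((Euc d × Euc d) × (Euc d × Euc d)) × ((Fin K → ℝ) × (Fin K → Euc d)) =>
      (stepF U η K q.1.1.1 (q.2.1, (q.2.2, q.1.2.1)), q.1.2.2) := by fun_prop
  refine ⟨(ρ.prod N).map fun q => (stepF U η K q.1.1.1 (q.2.1, (q.2.2, q.1.2.1)), q.1.2.2), ?_, ?_, ?_⟩
  · rw [Measure.map_map measurable_fst hΦ]
    have e1 : (ρ.prod N).map (Prod.map (fun r : (Euc d × Euc d) × (Euc d × Euc d) => (r.1.1, r.2.1)) id)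
        = (μ.prod (_root_.stdGaussian d)).prod N := by
      rw [← Measure.map_prod_map ρ N (by fun_prop) measurable_id, hρz, Measure.map_id]
    have e2 := reorder hK μ
    rw [← hN, ← e1, Measure.map_map (by fun_prop) (by fun_prop)] at e2
    conv_rhs => rw [← hμ, Tstep, ← e2]
    rw [Measure.map_map (stepF_meas hU η) (by fun_prop)]
    rfl
  · rw [Measure.map_map measurable_snd hΦ]
    have : (ρ.prod N).map ((fun r : (Euc d × Euc d) × (Euc d × Euc d) => r.2.2) ∘ Prod.fst) = gibbs U := by
      rw [← Measure.map_map (by fun_prop) measurable_fst, Measure.map_fst_prod]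
      simpa using hρ2
    exact this
  · have hsub : Measurable fun p : Euc d × Euc d => p.1 - p.2 := by fun_prop
    rw [eLpNorm_map_measure hsub.aestronglyMeasurable hΦ.aemeasurable]
    have lift : ∀ (f : (Euc d × Euc d) × (Euc d × Euc d) → Euc d) (a : ℝ), Measurable f →
        eLpNorm f 2 ρ ≤ ENNReal.ofReal a → eLpNorm (fun q => f q.1) 2 (ρ.prod N) ≤ ENNReal.ofReal a := by
      intro f a hf hfa
      have e : eLpNorm (fun q : ((Euc d × Euc d) × (Euc d × Euc d)) × ((Fin K → ℝ) × (Fin K → Euc d)) => f q.1) 2 (ρ.prod N) = eLpNorm f 2 ((ρ.prod N).map Prod.fst) :=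
        (eLpNorm_map_measure hf.aestronglyMeasurable measurable_fst.aemeasurable).symm
      rw [e, Measure.map_fst_prod]
      simpa using hfa
    have liftΓ : ∀ (f : Euc d × Euc d → Euc d) (a : ℝ), Measurable f →
        eLpNorm f 2 Γ ≤ ENNReal.ofReal a → eLpNorm (fun r => f r.1) 2 ρ ≤ ENNReal.ofReal a := by
      intro f a hf hfa
      have e : eLpNorm (fun r : (Euc d × Euc d) × (Euc d × Euc d) => f r.1) 2 ρ = eLpNorm f 2 (ρ.map Prod.fst) :=
        (eLpNorm_map_measure hf.aestronglyMeasurable measurable_fst.aemeasurable).symm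
      rw [e, hρf]
      exact hfa
    have hsnd : eLpNorm (fun p : Euc d × Euc d => p.2) 2 Γ ≤ ENNReal.ofReal M := by
      have e : eLpNorm (fun p : Euc d × Euc d => p.2) 2 Γ = eLpNorm id 2 (Γ.map Prod.snd) :=
        (eLpNorm_map_measure measurable_id.aestronglyMeasurable measurable_snd.aemeasurable).symm
      rw [e, h2, hM]
    have hfst : eLpNorm (fun p : Euc d × Euc d => p.1) 2 Γ ≤ ENNReal.ofReal (w + M) := by
      have := eLp2_add hw hM0 hsub measurable_snd hΓ hsnd
      simpa using this
    have hc0 : 0 ≤ 1 - η * m + η ^ 2 * L ^ 2 := by nlinarith [sq_nonneg (η * L)]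
    have mA : Measurable fun p : Euc d × Euc d => (p.1 - p.2) - η • (gradient U p.1 - gradient U p.2) := by fun_prop
    have bA : eLpNorm (fun p : Euc d × Euc d => (p.1 - p.2) - η • (gradient U p.1 - gradient U p.2)) 2 Γ
        ≤ ENNReal.ofReal ((1 - η * m + η ^ 2 * L ^ 2) * w) := by
      have hle : ∀ p : Euc d × Euc d, ‖(p.1 - p.2) - η • (gradient U p.1 - gradient U p.2)‖
        ≤ (1 - η * m + η ^ 2 * L ^ 2) * ‖p.1 - p.2‖ := fun p => sa_step_norm hU p.1 p.2 hη.le hη2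
      exact eLp2_mono hc0 hle hΓ
    have bA' := lift _ _ (by fun_prop) (liftΓ _ _ mA bA)
    have mE : Measurable fun r : (Euc d × Euc d) × (Euc d × Euc d) =>
      (r.2.2 - r.1.2) + η • gradient U r.1.2 - Real.sqrt (2 * η) • r.2.1 := by fun_prop
    have bE : eLpNorm (fun r : (Euc d × Euc d) × (Euc d × Euc d) =>
      -((r.2.2 - r.1.2) + η • gradient U r.1.2 - Real.sqrt (2 * η) • r.2.1)) 2 ρ ≤
        ENNReal.ofReal (η * (L * (η * L * M + Real.sqrt (2 * η * d)) + σ) * Real.exp (η * L)) := by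
      refine le_trans (le_of_eq ?_) hρ3
      exact eLpNorm_neg (fun r : (Euc d × Euc d) × (Euc d × Euc d) =>
        (r.2.2 - r.1.2) + η • gradient U r.1.2 - Real.sqrt (2 * η) • r.2.1) 2 ρ
    have bE' := lift _ _ mE.neg bE
    have mC : Measurable fun q : ((Euc d × Euc d) × (Euc d × Euc d)) × ((Fin K → ℝ) × (Fin K → Euc d)) =>
        corr U η K q.1.1.1 q.2.1 q.2.2 := by
      have h0 : Measurable fun q : ((Euc d × Euc d) × (Euc d × Euc d)) × ((Fin K → ℝ) × (Fin K → Euc d)) =>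
        (q.1.1.1, q.2.1, q.2.2) := by fun_prop
      simpa only [Function.comp_def] using (cont_corr hU η).measurable.comp h0
    have bC : eLpNorm (fun q : ((Euc d × Euc d) × (Euc d × Euc d)) × ((Fin K → ℝ) × (Fin K → Euc d)) =>
        corr U η K q.1.1.1 q.2.1 q.2.2) 2 (ρ.prod N)
        ≤ ENNReal.ofReal (Real.sqrt 2 * L ^ 2 * η * (w + M) + L * Real.sqrt (2 - 2 / K) * Real.sqrt (η * d)) := by
      refine eLp2_le_ofReal (by positivity) ?_
      have m2 : Measurable fun q : ((Euc d × Euc d) × (Euc d × Euc d)) × ((Fin K → ℝ) × (Fin K → Euc d)) =>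
        ‖corr U η K q.1.1.1 q.2.1 q.2.2‖ₑ ^ 2 := mC.enorm.pow_const 2
      rw [lintegral_prod (fun q : ((Euc d × Euc d) × (Euc d × Euc d)) × ((Fin K → ℝ) × (Fin K → Euc d)) =>
        ‖corr U η K q.1.1.1 q.2.1 q.2.2‖ₑ ^ 2) m2.aemeasurable]
      have hle : ∀ r : (Euc d × Euc d) × (Euc d × Euc d), ∫⁻ s, ‖corr U η K r.1.1 s.1 s.2‖ₑ ^ 2 ∂N
          ≤ ENNReal.ofReal (2 * L ^ 2 * η ^ 2 * L ^ 2) * ‖r.1.1‖ₑ ^ 2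
            + ENNReal.ofReal (L ^ 2 * (2 - 2 / K) * (η * d)) := by
        intro r
        refine (corr_lint hU hη.le hK r.1.1).trans (le_of_eq ?_)
        rw [enorm_sq_ofReal, ← ENNReal.ofReal_mul (by positivity), ← ENNReal.ofReal_add (by positivity) (by positivity)]
      refine (lintegral_mono hle).trans ?_
      have mf : Measurable fun r : (Euc d × Euc d) × (Euc d × Euc d) => ‖r.1.1‖ₑ ^ 2 := by fun_prop
      rw [lintegral_add_right _ measurable_const, lintegral_const_mul _ mf]
      have b1 : ∫⁻ r : (Euc d × Euc d) × (Euc d × Euc d), ‖r.1.1‖ₑ ^ 2 ∂ρ ≤ ENNReal.ofReal ((w + M) ^ 2) :=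
        lint_le_of_eLp2 (by positivity) (liftΓ _ _ measurable_fst hfst)
      refine (add_le_add_left (mul_le_mul_right b1 _) _).trans ?_
      rw [lintegral_const, measure_univ, mul_one, ← ENNReal.ofReal_mul (by positivity), ← ENNReal.ofReal_add (by positivity) (by positivity)]
      refine ENNReal.ofReal_le_ofReal ?_
      have s1 : Real.sqrt 2 ^ 2 = 2 := Real.sq_sqrt (by norm_num)
      have s2 : Real.sqrt (2 - 2 / K) ^ 2 = 2 - 2 / K := Real.sq_sqrt hK2
      have s3 : Real.sqrt (η * d) ^ 2 = η * d := Real.sq_sqrt (by positivity)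
      calc 2 * L ^ 2 * η ^ 2 * L ^ 2 * (w + M) ^ 2 + L ^ 2 * (2 - 2 / K) * (η * d)
          = (Real.sqrt 2 * L ^ 2 * η * (w + M)) ^ 2 + (L * Real.sqrt (2 - 2 / K) * Real.sqrt (η * d)) ^ 2 := by
            rw [mul_pow, mul_pow, mul_pow, s1, mul_pow, mul_pow L, s2, s3]; ring
        _ ≤ _ := by
            have a1 : 0 ≤ Real.sqrt 2 * L ^ 2 * η * (w + M) := by positivity
            have a2 : 0 ≤ L * Real.sqrt (2 - 2 / K) * Real.sqrt (η * d) := by positivity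
            nlinarith [mul_nonneg a1 a2]
    have bC' := eLp2_smul η hη.le bC
    have t1 := eLp2_add (by positivity) (by positivity) (by fun_prop) (by fun_prop) bA' bC'
    have t2 := eLp2_add (by positivity) (by positivity) (by fun_prop) (by fun_prop) t1 bE'
    convert t2 using 2
    ext1 q
    simp only [Function.comp_def, stepF, step_eq, Pi.neg_apply]
    module

end CouplePart

/-! ### Conclusion -/

section FinalPart

variable {d : ℕ} {U : Euc d → ℝ} {m L : ℝ} {K : ℕ}

lemma cost_eq (Γ : Measure (Euc d × Euc d)) :
    (∫⁻ p, ((‖p.1 - p.2‖₊ : ℝ≥0∞)) ^ 2 ∂Γ) ^ (1 / 2 : ℝ) = eLpNorm (fun p : Euc d × Euc d => p.1 - p.2) 2 Γ := by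
  have h : ∫⁻ p, ((‖p.1 - p.2‖₊ : ℝ≥0∞)) ^ 2 ∂Γ = eLpNorm (fun p : Euc d × Euc d => p.1 - p.2) 2 Γ ^ 2 :=
    (eLp2_sq (fun p : Euc d × Euc d => p.1 - p.2) Γ).symm
  rw [h, ← ENNReal.rpow_natCast, ← ENNReal.rpow_mul]
  norm_num

lemma W2_le_coupling {μ ν : Measure (Euc d)} (Γ : Measure (Euc d × Euc d)) (h1 : Γ.map Prod.fst = μ)
    (h2 : Γ.map Prod.snd = ν) : W2 μ ν ≤ eLpNorm (fun p : Euc d × Euc d => p.1 - p.2) 2 Γ := by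
  rw [← cost_eq]
  exact iInf₂_le Γ ⟨h1, h2⟩

lemma W2_lt_coupling {μ ν : Measure (Euc d)} {a : ℝ≥0∞} (h : W2 μ ν < a) :
    ∃ Γ : Measure (Euc d × Euc d), Γ.map Prod.fst = μ ∧ Γ.map Prod.snd = ν ∧
      eLpNorm (fun p : Euc d × Euc d => p.1 - p.2) 2 Γ < a := by
  unfold W2 at h
  simp only [iInf_lt_iff] at h
  obtain ⟨Γ, ⟨h1, h2⟩, h3⟩ := h
  exact ⟨Γ, h1, h2, by rwa [cost_eq] at h3⟩

lemma W2_finite {μ ν : Measure (Euc d)} [IsProbabilityMeasure μ] [IsProbabilityMeasure ν] {a b : ℝ}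
    (ha : 0 ≤ a) (hb : 0 ≤ b) (h1 : eLpNorm id 2 μ ≤ ENNReal.ofReal a) (h2 : eLpNorm id 2 ν ≤ ENNReal.ofReal b) :
    W2 μ ν ≠ ∞ := by
  refine ne_top_of_le_ne_top ENNReal.ofReal_ne_top ((W2_le_coupling (μ.prod ν) ?_ ?_).trans (?_ : _ ≤ ENNReal.ofReal (a + b)))
  · rw [Measure.map_fst_prod]; simp
  · rw [Measure.map_snd_prod]; simp
  · have e1 : eLpNorm (fun p : Euc d × Euc d => p.1) 2 (μ.prod ν) ≤ ENNReal.ofReal a := by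
      have e : eLpNorm (fun p : Euc d × Euc d => p.1) 2 (μ.prod ν) = eLpNorm id 2 ((μ.prod ν).map Prod.fst) :=
        (eLpNorm_map_measure measurable_id.aestronglyMeasurable measurable_fst.aemeasurable).symm
      rw [e, Measure.map_fst_prod]
      simpa using h1
    have e2 : eLpNorm (fun p : Euc d × Euc d => -p.2) 2 (μ.prod ν) ≤ ENNReal.ofReal b := by
      have e : eLpNorm (fun p : Euc d × Euc d => p.2) 2 (μ.prod ν) = eLpNorm id 2 ((μ.prod ν).map Prod.snd) :=
        (eLpNorm_map_measure measurable_id.aestronglyMeasurable measurable_snd.aemeasurable).symm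
      have e' := eLpNorm_neg (fun p : Euc d × Euc d => p.2) 2 (μ.prod ν)
      refine le_trans (le_of_eq e') ?_
      rw [e, Measure.map_snd_prod]
      simpa using h2
    have := eLp2_add ha hb (by fun_prop) (by fun_prop) e1 e2
    simpa only [← sub_eq_add_neg] using this

lemma final_num {η M W D s δ : ℝ} (hm : 0 < m) (hmL : m ≤ L) (hη : 0 < η) (hη0 : η * (400 * L ^ 2) ≤ m)
    (hM0 : 0 ≤ M) (hW : 0 ≤ W) (hD : 0 ≤ D) (hδ : 0 ≤ δ) (hs0 : 0 ≤ s) (hs : s ≤ 3 / 2) (hM : m * M ^ 2 ≤ δ)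
    (hDδ : D ^ 2 = η * δ)
    (h : W ≤ (1 - η * m + η ^ 2 * L ^ 2) * W
          + η * (Real.sqrt 2 * L ^ 2 * η * (W + M) + L * s * D)
          + η * (L * (η * L * M + Real.sqrt 2 * D)) * Real.exp (η * L)) :
    m * W ≤ L * D * (Real.sqrt 2 + (s + 1 / 2)) := by
  have hL : 0 < L := hm.trans_le hmL
  have r1 : Real.sqrt 2 ≤ 1.4143 := by rw [Real.sqrt_le_left (by norm_num)]; norm_num
  have r2 : 1.4142 ≤ Real.sqrt 2 := by exact Real.le_sqrt_of_sq_le (by norm_num)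
  have hηL : η * L ≤ 1 / 400 := by
    have : η * L * (400 * L) ≤ 1 * L := by linarith
    have h2 : η * L * 400 * L ≤ 1 * L := by linarith
    have := le_of_mul_le_mul_right h2 hL
    linarith
  have hηL0 : 0 < η * L := by positivity
  have he : Real.exp (η * L) ≤ 1.01 := by
    have h1 := Real.add_one_le_exp (-(η * L))
    rw [Real.exp_neg] at h1
    have h3 : (Real.exp (η * L))⁻¹ ≥ 399 / 400 := by linarith
    have h4 := inv_anti₀ (by norm_num) h3
    rw [inv_inv] at h4
    refine h4.trans (by norm_num)
  have hMb : η * L ^ 2 * M ≤ L * D / 20 := by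
    refine abs_le_of_sq_le_sq' ?_ (by positivity) |>.2
    have e1 : (η * L ^ 2 * M) ^ 2 * m ≤ (L * D / 20) ^ 2 * m := by
      calc (η * L ^ 2 * M) ^ 2 * m = (η ^ 2 * L ^ 4) * (m * M ^ 2) := by ring
        _ ≤ (η ^ 2 * L ^ 4) * δ := by gcongr
        _ = L ^ 2 * (η * δ) / 400 * (η * (400 * L ^ 2)) := by ring
        _ ≤ L ^ 2 * (η * δ) / 400 * m := by gcongr
        _ = _ := by rw [div_pow, mul_pow, hDδ]; ring
    exact le_of_mul_le_mul_right e1 hm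
  have h1 : η * (m * W) ≤ η * (η * L ^ 2 * W + (Real.sqrt 2 * (η * L ^ 2 * W) + Real.sqrt 2 * (η * L ^ 2 * M) + L * s * D)
      + (η * L ^ 2 * M + Real.sqrt 2 * (L * D)) * Real.exp (η * L)) := by linarith
  have h2 := le_of_mul_le_mul_left h1 hη
  have hLD : 0 ≤ L * D := by positivity
  have a1 : η * L ^ 2 * W ≤ m * W / 400 := by
    have : η * (400 * L ^ 2) * W ≤ m * W := by gcongr
    linarith
  have a0 : 0 ≤ η * L ^ 2 * W := by positivity
  have a2 : Real.sqrt 2 * (η * L ^ 2 * W) ≤ 1.4143 * (m * W / 400) := by gcongr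
  have a3 : Real.sqrt 2 * (η * L ^ 2 * M) ≤ 1.4143 * (L * D / 20) := by gcongr
  have a4 : (η * L ^ 2 * M + Real.sqrt 2 * (L * D)) * Real.exp (η * L) ≤ (L * D / 20 + 1.4143 * (L * D)) * 1.01 := by
    gcongr
  have a5 : L * D * s ≤ L * D * (3 / 2) := by gcongr
  have a6 : L * D * 1.4142 ≤ L * D * Real.sqrt 2 := by gcongr
  nlinarith

lemma W2_bound (hU : StrongAssumption U m L) {η : ℝ} (hη : 0 < η) (hη0 : η * (400 * L ^ 2) ≤ m) (hK : 1 ≤ K)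
    (μ : Measure (Euc d)) [IsProbabilityMeasure μ] (hμ : Tstep (stepF U η K) (prlmcNoise d K) μ = μ)
    {a : ℝ} (ha : 0 ≤ a) (hmom : eLpNorm id 2 μ ≤ ENNReal.ofReal a) :
    W2 μ (gibbs U) ≤ ENNReal.ofReal (L / m * Real.sqrt (η * d) * (Real.sqrt 2 + (Real.sqrt (2 - 2 / K) + 1 / 2))) := by
  have hm := hU.2.1
  have hmL := hU.2.2.1
  have hL : 0 < L := hm.trans_le hmL
  have hgp := gibbs_prob hU
  obtain ⟨M, hM0, hM, hMd⟩ := gibbs_moment hU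
  have hfin : W2 μ (gibbs U) ≠ ∞ := W2_finite ha hM0 hmom hM.le
  obtain ⟨W, hW0, hW⟩ : ∃ W : ℝ, 0 ≤ W ∧ W2 μ (gibbs U) = ENNReal.ofReal W :=
    ⟨(W2 μ (gibbs U)).toReal, ENNReal.toReal_nonneg, (ENNReal.ofReal_toReal hfin).symm⟩
  have hη2 : 2 * η * m ≤ 1 := by
    have h1 : η * m * m ≤ η * L ^ 2 := by
      have : m * m ≤ L ^ 2 := by nlinarith
      calc η * m * m = η * (m * m) := by ring
        _ ≤ _ := by gcongr
    have h2 : 2 * η * m * m ≤ 1 * m := by nlinarith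
    exact le_of_mul_le_mul_right h2 hm
  have hK1 : (1 : ℝ) ≤ K := by exact_mod_cast hK
  have hK0 : 0 ≤ 2 / (K : ℝ) := by positivity
  have hc0 : 0 ≤ 1 - η * m + η ^ 2 * L ^ 2 := by nlinarith [sq_nonneg (η * L)]
  let f : ℝ → ℝ := fun ε => (1 - η * m + η ^ 2 * L ^ 2) * (W + ε)
          + η * (Real.sqrt 2 * L ^ 2 * η * ((W + ε) + M) + L * Real.sqrt (2 - 2 / K) * Real.sqrt (η * d))
          + η * (L * (η * L * M + Real.sqrt (2 * η * d)) + ε) * Real.exp (η * L)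
  have hf : ∀ ε, 0 < ε → W ≤ f ε := by
    intro ε hε
    have hlt : W2 μ (gibbs U) < ENNReal.ofReal (W + ε) := by
      rw [hW]
      exact (ENNReal.ofReal_lt_ofReal_iff (by linarith)).2 (by linarith)
    obtain ⟨Γ, g1, g2, g3⟩ := W2_lt_coupling hlt
    obtain ⟨Γ', g1', g2', g3'⟩ := couple_step hU hη hη2 hK μ hμ hM0 hM hε (by linarith : 0 ≤ W + ε) Γ g1 g2 g3.le
    have := (W2_le_coupling Γ' g1' g2').trans g3'
    rw [hW] at this
    refine (ENNReal.ofReal_le_ofReal_iff ?_).1 this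
    positivity
  have hf0 : W ≤ f 0 := by
    have hcf : Continuous f := by fun_prop
    have ht : Tendsto f (𝓝[>] 0) (𝓝 (f 0)) := hcf.continuousAt.mono_left nhdsWithin_le_nhds
    exact ge_of_tendsto ht (by filter_upwards [self_mem_nhdsWithin] with ε hε using hf ε hε)
  have hs : Real.sqrt (2 - 2 / K) ≤ 3 / 2 := by
    rw [Real.sqrt_le_left (by norm_num)]
    linarith
  have hDD : Real.sqrt (2 * η * d) = Real.sqrt 2 * Real.sqrt (η * d) := by
    rw [← Real.sqrt_mul (by norm_num), mul_assoc]
  have key := final_num (η := η) (M := M) (W := W) (D := Real.sqrt (η * d)) (s := Real.sqrt (2 - 2 / K)) (δ := d)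
    hm hmL hη hη0 hM0 hW0 (Real.sqrt_nonneg _) (by positivity) (Real.sqrt_nonneg _) hs hMd
    (Real.sq_sqrt (by positivity)) (by
      have := hf0
      simp only [f, add_zero, hDD] at this
      exact this)
  rw [hW]
  refine ENNReal.ofReal_le_ofReal ?_
  rw [div_mul_eq_mul_div, div_mul_eq_mul_div, le_div_iff₀ hm]
  linarith

lemma stmt2_aux (hm : 0 < m) (hmL : m ≤ L) :
    ∃ η₀ : ℝ, η₀ ∈ Set.Ioo (0 : ℝ) 1 ∧
      ∀ (d K : ℕ), 1 ≤ K → ∀ U : Euc d → ℝ, StrongAssumption U m L →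
        ∀ η : ℝ, η ∈ Set.Ioo (0 : ℝ) (min η₀ (2 / (m + L))) →
          ∃ πη : Measure (Euc d), IsProbabilityMeasure πη ∧
            πη.bind (prlmcKernel U η K) = πη ∧
            (∀ μ : Measure (Euc d), IsProbabilityMeasure μ →
              μ.bind (prlmcKernel U η K) = μ → μ = πη) ∧
            W2 πη (gibbs U) ≤
              ENNReal.ofReal ((L / m) * Real.sqrt η *
                (Real.sqrt (2 * (d : ℝ) + 4 * η ^ 2 * L * (d : ℝ) + 8 * L ^ 2 * η ^ 2 * (d : ℝ)) +
                 Real.sqrt (4 - 2 / (K : ℝ)) *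
                   Real.sqrt (η * L ^ 2 *
                       (∫⁻ y, (‖y‖₊ : ℝ≥0∞) ^ 2 ∂πη).toReal / 3 + (d : ℝ)))) := by
  have hL : 0 < L := hm.trans_le hmL
  refine ⟨min (1 / 2) (m / (400 * L ^ 2)), ⟨by positivity, (min_le_left _ _).trans_lt (by norm_num)⟩, ?_⟩
  intro d K hK U hU η hη
  have hη1 : 0 < η := hη.1
  have hη0 : η * (400 * L ^ 2) ≤ m := by
    have := (hη.2.trans_le ((min_le_left _ _).trans (min_le_right _ _))).le
    rwa [le_div_iff₀ (by positivity)] at this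
  have hηL : η * L ≤ 1 := by
    have h2 : η * L * 400 * L ≤ 1 * L := by linarith
    have := le_of_mul_le_mul_right h2 hL
    linarith [mul_pos hη1 hL]
  have hηm : m * η ≤ 1 := by nlinarith
  have hnp := noise_prob (d := d) hK
  obtain ⟨c, hc0, hc⟩ := step_zero hU hη1.le hK
  have hF : Contr (stepF U η K) (prlmcNoise d K) (Real.sqrt (1 - m * η)) c := by
    refine ⟨stepF_meas hU η, Real.sqrt_nonneg _, ?_, hc0, fun x y => ?_, hc⟩
    · rw [Real.sqrt_lt' one_pos]
      nlinarith [mul_pos hm hη1]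
    · refine (step_contr hU hη1.le hηL hK x y).trans (ENNReal.ofReal_le_ofReal ?_)
      rw [Real.sq_sqrt (by linarith)]
      gcongr ?_ * _
      have : η * (η * (400 * L ^ 2)) ≤ η * m := by gcongr
      nlinarith [sq_nonneg (η * L)]
  obtain ⟨μ, hμp, hμ, hμm⟩ := hF.exists
  have ha : 0 ≤ c / (1 - Real.sqrt (1 - m * η)) := by
    have := hF.q1
    exact div_nonneg hc0 (by linarith)
  refine ⟨μ, hμp, ?_, ?_, ?_⟩
  · rw [bind_eq hU η hK, hμ]
  · intro μ' hμ' h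
    rw [bind_eq hU η hK] at h
    exact hF.unique μ' μ h hμ
  · refine (W2_bound hU hη1 hη0 hK μ hμ ha hμm).trans (ENNReal.ofReal_le_ofReal ?_)
    have hK1 : (1 : ℝ) ≤ K := by exact_mod_cast hK
    have hK0 : 0 ≤ 2 / (K : ℝ) := by positivity
    have hK2 : 0 ≤ 2 - 2 / (K : ℝ) := by
      have : 2 / (K : ℝ) ≤ 2 := div_le_self (by norm_num) hK1
      linarith
    rw [Real.sqrt_mul hη1.le]
    have b1 : Real.sqrt d * Real.sqrt 2 ≤ Real.sqrt (2 * (d : ℝ) + 4 * η ^ 2 * L * (d : ℝ) + 8 * L ^ 2 * η ^ 2 * (d : ℝ)) := by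
      rw [← Real.sqrt_mul (by positivity)]
      apply Real.sqrt_le_sqrt
      have : 0 ≤ 4 * η ^ 2 * L * (d : ℝ) + 8 * L ^ 2 * η ^ 2 * (d : ℝ) := by positivity
      linarith
    have b2 : Real.sqrt (2 - 2 / K) + 1 / 2 ≤ Real.sqrt (4 - 2 / (K : ℝ)) := by
      apply Real.le_sqrt_of_sq_le
      have h1 := Real.sq_sqrt hK2
      have hs : Real.sqrt (2 - 2 / K) ≤ 3 / 2 := by
        rw [Real.sqrt_le_left (by norm_num)]
        linarith
      nlinarith
    have b3 : Real.sqrt d ≤ Real.sqrt (η * L ^ 2 * (∫⁻ y, (‖y‖₊ : ℝ≥0∞) ^ 2 ∂μ).toReal / 3 + (d : ℝ)) := by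
      apply Real.sqrt_le_sqrt
      have : 0 ≤ η * L ^ 2 * (∫⁻ y, (‖y‖₊ : ℝ≥0∞) ^ 2 ∂μ).toReal / 3 := by positivity
      linarith
    calc L / m * (Real.sqrt η * Real.sqrt d) * (Real.sqrt 2 + (Real.sqrt (2 - 2 / K) + 1 / 2))
        = L / m * Real.sqrt η * (Real.sqrt d * Real.sqrt 2 + (Real.sqrt (2 - 2 / K) + 1 / 2) * Real.sqrt d) := by ring
      _ ≤ _ := by gcongr

end FinalPart

/-- Under Assumption 1, for any `η ∈ (0, η₀ ∧ 2/(m+L))`, the 2-Wasserstein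
distance between the stationary distribution `π_η` of PRLMC and the target `π ∝ e^{-U}`
satisfies
`W₂(π_η, π) ≤ (L/m) √η [ (2d + 4η²Ld + 8L²η²d)^{1/2} + √(4 − 2/K) (ηL² π_η(|x|²)/3 + d)^{1/2} ]`. -/
theorem stmt2 (m L : ℝ) (hm : 0 < m) (hmL : m ≤ L) :
    ∃ η₀ : ℝ, η₀ ∈ Set.Ioo (0 : ℝ) 1 ∧
      ∀ (d K : ℕ), 1 ≤ K → ∀ U : Euc d → ℝ, StrongAssumption U m L →
        ∀ η : ℝ, η ∈ Set.Ioo (0 : ℝ) (min η₀ (2 / (m + L))) →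
          ∃ πη : Measure (Euc d), IsProbabilityMeasure πη ∧
            πη.bind (prlmcKernel U η K) = πη ∧
            (∀ μ : Measure (Euc d), IsProbabilityMeasure μ →
              μ.bind (prlmcKernel U η K) = μ → μ = πη) ∧
            W2 πη (gibbs U) ≤
              ENNReal.ofReal ((L / m) * Real.sqrt η *
                (Real.sqrt (2 * (d : ℝ) + 4 * η ^ 2 * L * (d : ℝ) + 8 * L ^ 2 * η ^ 2 * (d : ℝ)) +
                 Real.sqrt (4 - 2 / (K : ℝ)) *
                   Real.sqrt (η * L ^ 2 *
                       (∫⁻ y, (‖y‖₊ : ℝ≥0∞) ^ 2 ∂πη).toReal / 3 + (d : ℝ)))) := by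
  exact stmt2_aux hm hmL

end
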